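/- If a projective line arrangement 𝓛 ⊂ ℂP² equals 𝓛' ∪ L where L is a simple line of 𝓛 and 𝓛' is nonempty, then π₁(ℂP² \ 𝓛) ≅ π₁(ℂP² \ 𝓛') × ℤ. -/

import Mathlib

open scoped Classical

/-- The complex projective plane. -/
abbrev CP2 := Projectivization ℂ (Fin 3 → ℂ)

noncomputable instance : TopologicalSpace CP2 := instTopologicalSpaceQuotient

/-- A projective line in `ℂP²`: the zero locus of a nonzero linear form. -/
def IsProjLine (l : Set CP2) : Prop :=
  ∃ a : Fin 3 → ℂ, a ≠ 0 ∧ l = {x : CP2 | ∑ i, a i * x.rep i = 0}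

/-! Loops are measured by holonomies: functionals on curves with values in a group that are flat,
that is, functorial and homotopy invariant. Holonomies glue along open covers, so the kernel of the
map of fundamental groups that fills in a line `L₀` is normally generated by the meridian of `L₀`.

In the affine chart where `L₀` is at infinity, the other lines are graphs `y = m i * x + c i`, and
`L₀` is simple exactly when the slopes `m i` are distinct. Far out along a line through the origin
these graphs are then far apart, so the rotation of the plane once around the origin, a meridian of
`L₀`, can be corrected near each of them so as to preserve the arrangement in the fibre over a given
`x`. The meridian therefore commutes with the loops in this fibre. These generate the fundamental
group: loops in neighbouring generic fibres deform into each other, loops in a special fibre can be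
pushed to generic fibres, and an arbitrary loop is a product of loops in fibres once its points are
joined, within their fibres, to a convex region far from the lines. So the meridian is central and
generates the kernel. The winding number around a line `y = 0` of the remaining arrangement is `±1`
on the meridian and splits off the factor `ℤ`.
-/

namespace LineArrangement

open Set Topology Filter unitInterval CategoryTheory

section Holonomy

variable {E X Y Q : Type*} [NormedAddCommGroup E] [NormedSpace ℝ E] [TopologicalSpace X]
  [TopologicalSpace Y] [Group Q]

/-- The straight path from `x` to `y`, with its endpoints recorded as values at `0` and `1` rather
than in its type. -/
abbrev chord (x y : E) : C(I, E) := Path.segment x y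

/-- The homotopy class of a path, as an arrow of the fundamental groupoid. -/
def pathClass {x y : X} (γ : Path x y) : FundamentalGroupoid.mk x ⟶ FundamentalGroupoid.mk y :=
  Path.Homotopic.Quotient.mk γ

theorem pathClass_trans {x y z : X} (γ : Path x y) (δ : Path y z) :
    pathClass (γ.trans δ) = pathClass γ ≫ pathClass δ :=
  rfl

theorem pathClass_eq {x y : X} {γ δ : Path x y} (h : γ.Homotopic δ) : pathClass γ = pathClass δ :=
  Quotient.sound h

/-- The homotopy class of a loop, as an element of the fundamental group. -/
def loopClass {b : X} (γ : Path b b) : FundamentalGroup X b :=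
  pathClass γ

theorem loopClass_surjective {b : X} : Function.Surjective (loopClass (b := b)) :=
  Path.Homotopic.Quotient.mk_surjective

theorem loopClass_eq_iff {b : X} {γ δ : Path b b} :
    loopClass γ = loopClass δ ↔ γ.Homotopic δ :=
  Path.Homotopic.Quotient.eq

theorem loopClass_eq_one_iff {b : X} {γ : Path b b} :
    loopClass γ = 1 ↔ γ.Homotopic (.refl b) :=
  loopClass_eq_iff

theorem map_loopClass (f : C(X, Y)) {b : X} (γ : Path b b) :
    FundamentalGroup.map f b (loopClass γ) = loopClass (γ.map f.continuous) :=
  rfl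

/-- A flat `Q`-valued functional on the curves of `X`: a functor from the fundamental groupoid of
`X` to the group `Q`. Flatness says that the value over the hypotenuse of a triangle is the product
of the values over its legs; factors are ordered as in `FundamentalGroup`, the later one first. -/
structure Holonomy (X Q : Type*) [TopologicalSpace X] [Group Q] where
  /-- The value on a curve. -/
  toFun : C(I, X) → Q
  map_triangle' : ∀ f : C(ℝ × ℝ, X), toFun (f.comp (chord (1, 0) (1, 1))) *
    toFun (f.comp (chord (0, 0) (1, 0))) = toFun (f.comp (chord (0, 0) (1, 1)))

namespace Holonomy

instance : CoeFun (Holonomy X Q) fun _ => C(I, X) → Q := ⟨toFun⟩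

theorem map_triangle (Φ : Holonomy X Q) (f : C(E, X)) (x y z : E) :
    Φ (f.comp (chord y z)) * Φ (f.comp (chord x y)) = Φ (f.comp (chord x z)) := by
  let A : C(ℝ × ℝ, E) := ⟨fun p => x + p.1 • (y - x) + p.2 • (z - y), by fun_prop⟩
  have edge (a b : ℝ × ℝ) : A.comp (chord a b) = chord (A a) (A b) := by
    ext t
    change A (AffineMap.lineMap a b (t : ℝ)) = AffineMap.lineMap (A a) (A b) (t : ℝ)
    simp only [A, ContinuousMap.coe_mk, AffineMap.lineMap_apply,
      vsub_eq_sub, vadd_eq_add, Prod.fst_add, Prod.snd_add, Prod.smul_fst, Prod.smul_snd,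
      Prod.fst_sub, Prod.snd_sub, smul_eq_mul]
    module
  have h := Φ.map_triangle' (f.comp A)
  simp only [ContinuousMap.comp_assoc, edge] at h
  simpa [A] using h

theorem map_chord_self (Φ : Holonomy X Q) (f : C(E, X)) (x : E) : Φ (f.comp (chord x x)) = 1 :=
  mul_eq_left.1 (Φ.map_triangle f x x x)

theorem map_const (Φ : Holonomy X Q) (x : X) : Φ (.const I x) = 1 :=
  Φ.map_chord_self (.const ℝ x) 0

theorem map_trans (Φ : Holonomy X Q) {x y z : X} (γ : Path x y) (δ : Path y z) :
    Φ (γ.trans δ) = Φ δ * Φ γ := by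
  let f : C(ℝ, X) := ⟨(γ.trans δ).extend, (γ.trans δ).continuous_extend⟩
  have hf (a b : ℝ) (ζ : C(I, X))
      (h : ∀ t : I, (γ.trans δ).extend (AffineMap.lineMap a b (t : ℝ)) = ζ t) :
      f.comp (chord a b) = ζ := ContinuousMap.ext h
  have h := Φ.map_triangle f 0 (1 / 2) 1
  rw [hf 0 (1 / 2) γ fun t => ?_, hf (1 / 2) 1 δ fun t => ?_, hf 0 1 (γ.trans δ) fun t => ?_] at h
  · exact h.symm
  · simp [AffineMap.lineMap_apply]
  · have ht : AffineMap.lineMap (1 / 2 : ℝ) 1 (t : ℝ) = ((1 + t) / 2 : ℝ) := by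
      rw [AffineMap.lineMap_apply_ring']; ring
    rw [ht, Path.extend_trans_of_half_le _ _ (by linarith [t.2.1])]
    simp [mul_div_cancel₀]
  · have ht : AffineMap.lineMap 0 (1 / 2 : ℝ) (t : ℝ) = (t / 2 : ℝ) := by
      rw [AffineMap.lineMap_apply_ring']; ring
    rw [ht, Path.extend_trans_of_le_half _ _ (by linarith [t.2.2])]
    simp [mul_div_cancel₀]

theorem map_symm (Φ : Holonomy X Q) {x y : X} (γ : Path x y) : Φ γ.symm = (Φ γ)⁻¹ := by
  let f : C(ℝ, X) := ⟨γ.extend, γ.continuous_extend⟩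
  have h := (Φ.map_triangle f 0 1 0).trans (Φ.map_chord_self f 0)
  have h₁ : f.comp (chord 0 1) = γ := by
    ext t
    simp [f, chord, AffineMap.lineMap_apply]
  have h₂ : f.comp (chord 1 0) = γ.symm := by
    ext t
    simp [f, chord, AffineMap.lineMap_apply, neg_add_eq_sub, ← Path.extend_symm_apply]
  rw [h₁, h₂] at h
  exact eq_inv_of_mul_eq_one_left h

theorem map_square (Φ : Holonomy X Q) (H : C(I × I, X)) {γ₀ γ₁ α β : C(I, X)}
    (hγ₀ : ∀ t, H (0, t) = γ₀ t) (hγ₁ : ∀ t, H (1, t) = γ₁ t) (hα : ∀ s, H (s, 0) = α s)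
    (hβ : ∀ s, H (s, 1) = β s) : Φ γ₁ * Φ α = Φ β * Φ γ₀ := by
  let proj : C(ℝ × ℝ, I × I) :=
    ⟨Prod.map (projIcc 0 1 zero_le_one) (projIcc 0 1 zero_le_one), by fun_prop⟩
  have edge (a b : ℝ × ℝ) (ζ : C(I, X))
      (h : ∀ t : I, H (proj (AffineMap.lineMap a b (t : ℝ))) = ζ t) :
      (H.comp proj).comp (chord a b) = ζ := ContinuousMap.ext h
  have h := (Φ.map_triangle (H.comp proj) (0, 0) (1, 0) (1, 1)).trans
    (Φ.map_triangle (H.comp proj) (0, 0) (0, 1) (1, 1)).symm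
  rw [edge _ _ γ₁ fun t => ?_, edge _ _ α fun t => ?_, edge _ _ β fun t => ?_,
    edge _ _ γ₀ fun t => ?_] at h
  · exact h
  all_goals simp [proj, AffineMap.lineMap_apply, hγ₀, hγ₁, hα, hβ]

theorem map_eq_of_homotopic (Φ : Holonomy X Q) {x y : X} {γ δ : Path x y} (h : γ.Homotopic δ) :
    Φ γ = Φ δ := by
  obtain ⟨H⟩ := h
  have hH := Φ.map_square H.toContinuousMap (γ₀ := γ) (γ₁ := δ) (α := .const I x) (β := .const I y)
    H.apply_zero H.apply_one H.source H.target
  rwa [map_const, map_const, mul_one, one_mul, eq_comm] at hH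

theorem map_eq_of_convex (Φ : Holonomy X Q) {K : Set E} (hK : Convex ℝ K) (f : C(K, X))
    {γ δ : C(I, K)} (h₀ : γ 0 = δ 0) (h₁ : γ 1 = δ 1) : Φ (f.comp γ) = Φ (f.comp δ) := by
  let H : C(I × I, K) :=
    ⟨fun p => ⟨AffineMap.lineMap (γ p.2 : E) (δ p.2 : E) (p.1 : ℝ),
      hK.lineMap_mem (γ p.2).2 (δ p.2).2 p.1.2⟩, by
        simp only [AffineMap.lineMap_apply_module]; fun_prop⟩
  have h := Φ.map_square (f.comp H) (γ₀ := f.comp γ) (γ₁ := f.comp δ)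
    (α := .const I (f (γ 0))) (β := .const I (f (γ 1)))
    (fun t => congrArg f (Subtype.ext (by simp [H])))
    (fun t => congrArg f (Subtype.ext (by simp [H])))
    (fun s => congrArg f (Subtype.ext (by simp [H, ← h₀])))
    (fun s => congrArg f (Subtype.ext (by simp [H, ← h₁])))
  rwa [map_const, map_const, mul_one, one_mul, eq_comm] at h

/-- The pullback of a holonomy along a continuous map. -/
def comap (Φ : Holonomy Y Q) (f : C(X, Y)) : Holonomy X Q where
  toFun γ := Φ (f.comp γ)
  map_triangle' g := Φ.map_triangle (f.comp g) _ _ _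

/-- The image of a holonomy under a homomorphism of its group of values. -/
def mapHom {R : Type*} [Group R] (φ : Q →* R) (Φ : Holonomy X Q) : Holonomy X R where
  toFun γ := φ (Φ γ)
  map_triangle' g := by rw [← map_mul, Φ.map_triangle]

/-- A choice, for every point `x`, of a homotopy class of paths from the base point `b` to `x`
closes curves up to loops at `b`. -/
noncomputable def ofFraming {b : X}
    (k : ∀ x, FundamentalGroupoid.mk b ⟶ FundamentalGroupoid.mk x) :
    Holonomy X (FundamentalGroup X b) where
  toFun γ := k (γ 0) ≫ pathClass ⟨γ, rfl, rfl⟩ ≫ inv (k (γ 1))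
  map_triangle' f := by
    have h (a c : ℝ × ℝ) :
        f.comp (chord a c) = ((Path.segment a c).map f.continuous : C(I, X)) := rfl
    have class_eq {x y : X} (γ : Path x y) (δ : C(I, X)) (h : δ = γ) :
        k (δ 0) ≫ pathClass ⟨δ, rfl, rfl⟩ ≫ inv (k (δ 1)) = k x ≫ pathClass γ ≫ inv (k y) := by
      obtain ⟨γ, rfl, rfl⟩ := γ
      subst h
      rfl
    rw [class_eq _ _ (h _ _), class_eq _ _ (h _ _), class_eq _ _ (h _ _), End.mul_def]
    simp only [Category.assoc, IsIso.inv_hom_id_assoc]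
    rw [← Category.assoc (pathClass _), ← pathClass_trans, ← Path.map_trans,
      pathClass_eq (SimplyConnectedSpace.paths_homotopic _ _ |>.map f)]

theorem ofFraming_apply {b : X} (k : ∀ x, FundamentalGroupoid.mk b ⟶ FundamentalGroupoid.mk x)
    {x y : X} (γ : Path x y) :
    ofFraming k γ = k x ≫ pathClass γ ≫ inv (k y) := by
  obtain ⟨γ, rfl, rfl⟩ := γ
  rfl

end Holonomy

end Holonomy

section Gluing

variable {X Q : Type*} [TopologicalSpace X] [Group Q]

theorem IccExtend_comp_chord (γ : C(I, X)) :
    (ContinuousMap.IccExtend zero_le_one γ).comp (chord 0 1) = γ := by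
  ext t
  simp [AffineMap.lineMap_apply]

theorem curve_induction {P : C(I, X) → Prop}
    (trans : ∀ (f : C(ℝ, X)) (a b c : ℝ),
      P (f.comp (chord a b)) → P (f.comp (chord b c)) → P (f.comp (chord a c)))
    (small : ∀ x, ∃ W ∈ 𝓝 x, ∀ γ : C(I, X), (∀ t, γ t ∈ W) → P γ) (γ : C(I, X)) : P γ := by
  let f : C(ℝ, X) := ContinuousMap.IccExtend zero_le_one γ
  have h : P (f.comp (chord 0 1)) := by
    refine PreconnectedSpace.induction₂' (fun a b => P (f.comp (chord a b))) (fun a => ?_)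
      ⟨trans f⟩ 0 1
    obtain ⟨W, hW, hP⟩ := small (f a)
    obtain ⟨ε, hε, hball⟩ := Metric.mem_nhds_iff.1 (f.continuous.continuousAt hW)
    have inside {b c : ℝ} (hb : b ∈ Metric.ball a ε) (hc : c ∈ Metric.ball a ε) :
        P (f.comp (chord b c)) :=
      hP _ fun t => hball ((convex_ball a ε).lineMap_mem hb hc t.2)
    filter_upwards [Metric.ball_mem_nhds a hε] with b hb
    exact ⟨inside (Metric.mem_ball_self hε) hb, inside hb (Metric.mem_ball_self hε)⟩
  rwa [IccExtend_comp_chord] at h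

theorem Holonomy.map_trans_of_convex {E : Type*} [NormedAddCommGroup E] [NormedSpace ℝ E]
    (Φ : Holonomy X Q) {K : Set E} (hK : Convex ℝ K) (f : C(K, X)) {γ δ η : C(I, K)}
    (hγδ : γ 1 = δ 0) (h₀ : γ 0 = η 0) (h₁ : δ 1 = η 1) :
    Φ (f.comp δ) * Φ (f.comp γ) = Φ (f.comp η) := by
  let γ' : Path (γ 0) (γ 1) := ⟨γ, rfl, rfl⟩
  let δ' : Path (γ 1) (δ 1) := ⟨δ, hγδ.symm, rfl⟩
  have h := Φ.map_eq_of_convex hK f (γ := γ'.trans δ') (by simpa using h₀) (by simpa using h₁)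
  rw [← h]
  exact ((Φ.comap f).map_trans γ' δ').symm

theorem exists_primitive {E : Type*} [NormedAddCommGroup E] [NormedSpace ℝ E] {e : E → E → Q}
    {ε r : ℝ} (hε : 0 < ε)
    (he : ∀ x ∈ Metric.ball 0 r, ∀ y z, dist x y < ε → dist x z < ε → e y z * e x y = e x z) :
    ∃ g : E → Q, ∀ x ∈ Metric.ball 0 r, ∀ y, dist x y < ε / 2 → e x y * g x = g y := by
  obtain ⟨n, hn⟩ := exists_nat_gt (r / (ε / 2))
  let p (x : E) (k : ℕ) : E := (k / n : ℝ) • x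
  let g (x : E) (k : ℕ) : Q := k.rec 1 fun j q => e (p x j) (p x (j + 1)) * q
  refine ⟨fun x => g x n, fun x hx y hxy => ?_⟩
  have hr := Metric.pos_of_mem_ball hx
  have hn₀ : (0 : ℝ) < n := (div_pos hr (half_pos hε)).trans hn
  have frac_le {k : ℕ} (hk : k ≤ n) : (k / n : ℝ) ≤ 1 := div_le_one_of_le₀ (mod_cast hk) hn₀.le
  have mesh (k : ℕ) : dist (p x k) (p x (k + 1)) < ε / 2 := by
    have hd : dist (p x k) (p x (k + 1)) = ‖x‖ / n := by
      rw [dist_eq_norm_sub', ← sub_smul, ← sub_div]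
      simp [norm_smul, div_eq_inv_mul]
    rw [hd, div_lt_iff₀ hn₀, mul_comm]
    exact (mem_ball_zero_iff.1 hx).trans ((div_lt_iff₀ (half_pos hε)).1 hn)
  have close {k : ℕ} (hk : k ≤ n) : dist (p x k) (p y k) < ε / 2 := by
    rw [dist_smul₀, Real.norm_of_nonneg (by positivity)]
    exact (mul_le_of_le_one_left dist_nonneg (frac_le hk)).trans_lt hxy
  have inside {k : ℕ} (hk : k ≤ n) : p x k ∈ Metric.ball 0 r :=
    (convex_ball 0 r).smul_mem_of_zero_mem (Metric.mem_ball_self hr) hx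
      ⟨by positivity, frac_le hk⟩
  have key {k : ℕ} (hk : k ≤ n) : e (p x k) (p y k) * g x k = g y k := by
    induction k with
    | zero =>
      have h := he 0 (Metric.mem_ball_self hr) 0 0 (by simpa) (by simpa)
      simpa [p, g] using h
    | succ k ih =>
      have hk' := (Nat.le_succ k).trans hk
      have far : dist (p x k) (p y (k + 1)) < ε :=
        (dist_triangle _ _ _).trans_lt (by linarith [mesh k, close hk])
      have via_x := he _ (inside hk') (p x (k + 1)) (p y (k + 1)) (by linarith [mesh k]) far
      have via_y := he _ (inside hk') (p y k) (p y (k + 1)) (by linarith [close hk']) far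
      change _ * (_ * g x k) = _ * g y k
      rw [← ih hk', ← mul_assoc, ← mul_assoc, via_x, via_y]
  simpa [p, div_self hn₀.ne'] using key le_rfl

/-- A functional on curves that near every point coincides with a holonomy. -/
def IsLocallyHolonomy (L : C(I, X) → Q) : Prop :=
  ∀ x, ∃ W ∈ 𝓝 x, ∃ Φ : Holonomy W Q, ∀ γ : C(I, W), Φ γ = L (.comp ⟨_, continuous_subtype_val⟩ γ)

/-- `g` is a primitive of `L` along `f`: its increments over short segments are the values of `L`.
It is used to integrate a functional known only on short curves. -/
def IsPrimitive (L : C(I, X) → Q) (f : C(ℝ, X)) (g : ℝ → Q) : Prop :=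
  ∀ a ∈ I, ∀ᶠ b in 𝓝 a, L (f.comp (chord a b)) * g a = g b

theorem IsPrimitive.increment_eq {L : C(I, X) → Q} {f f' : C(ℝ, X)} {g g' : ℝ → Q}
    (hg : IsPrimitive L f g) (hg' : IsPrimitive L f' g')
    (h : f.comp (chord 0 1) = f'.comp (chord 0 1)) : g 1 * (g 0)⁻¹ = g' 1 * (g' 0)⁻¹ := by
  have agree {a : ℝ} (ha : a ∈ I) : f a = f' a := by
    simpa [AffineMap.lineMap_apply] using DFunLike.congr_fun h ⟨a, ha⟩
  have hP : ∀ a b : I, g b * (g a)⁻¹ = g' b * (g' a)⁻¹ := by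
    refine PreconnectedSpace.induction₂' _ (fun a => ?_) ⟨fun a b c h₁ h₂ => ?_⟩
    · filter_upwards [continuous_subtype_val.continuousAt.eventually (hg a a.2),
        continuous_subtype_val.continuousAt.eventually (hg' a a.2)] with b hb hb'
      have hab : f.comp (chord (a : ℝ) b) = f'.comp (chord (a : ℝ) b) :=
        ContinuousMap.ext fun t => agree ((convex_Icc 0 1).lineMap_mem a.2 b.2 t.2)
      have hab' : g b * (g a)⁻¹ = g' b * (g' a)⁻¹ := by
        rw [← hb, ← hb', hab, mul_inv_cancel_right, mul_inv_cancel_right]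
      exact ⟨hab', by simpa using congrArg (·⁻¹) hab'⟩
    · rw [← inv_mul_cancel_right (g c) (g b), mul_assoc, h₁, h₂]
      group
  exact hP 0 1

theorem IsLocallyHolonomy.exists_eventually_mul_eq {L : C(I, X) → Q} (hL : IsLocallyHolonomy L)
    {E : Type*} [NormedAddCommGroup E] [NormedSpace ℝ E] [ProperSpace E] (f : C(E, X)) (r : ℝ) :
    ∃ g : E → Q, ∀ x ∈ Metric.ball 0 r, ∀ᶠ y in 𝓝 x, L (f.comp (chord x y)) * g x = g y := by
  choose W hW Φ hΦ using hL
  obtain ⟨ε, hε, hball⟩ := lebesgue_number_lemma_of_metric (isCompact_closedBall (0 : E) r)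
    (c := fun w => f ⁻¹' interior (W w)) (fun w => isOpen_interior.preimage f.continuous)
    fun x _ => mem_iUnion.2 ⟨f x, mem_interior_iff_mem_nhds.2 (hW _)⟩
  have flat (x : E) (hx : x ∈ Metric.ball 0 r) (y z : E) (hy : dist x y < ε) (hz : dist x z < ε) :
      L (f.comp (chord y z)) * L (f.comp (chord x y)) = L (f.comp (chord x z)) := by
    obtain ⟨w, hw⟩ := hball x (Metric.ball_subset_closedBall hx)
    have hK := convex_ball x ε
    let fW : C(Metric.ball x ε, W w) :=
      ⟨fun p => ⟨f p, interior_subset (hw p.2)⟩, by fun_prop⟩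
    let seg (a b : Metric.ball x ε) : C(I, Metric.ball x ε) :=
      ⟨fun t => ⟨AffineMap.lineMap (a : E) (b : E) (t : ℝ), hK.lineMap_mem a.2 b.2 t.2⟩, by
        fun_prop⟩
    let x' : Metric.ball x ε := ⟨x, Metric.mem_ball_self hε⟩
    let y' : Metric.ball x ε := ⟨y, Metric.mem_ball'.2 hy⟩
    let z' : Metric.ball x ε := ⟨z, Metric.mem_ball'.2 hz⟩
    have h := (Φ w).map_trans_of_convex hK fW (γ := seg x' y') (δ := seg y' z') (η := seg x' z')
      (Subtype.ext (by simp [seg])) (Subtype.ext (by simp [seg])) (Subtype.ext (by simp [seg]))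
    simp only [hΦ] at h
    exact h
  obtain ⟨g, hg⟩ := exists_primitive (e := fun x y => L (f.comp (chord x y))) hε flat
  refine ⟨g, fun x hx => ?_⟩
  filter_upwards [Metric.ball_mem_nhds x (half_pos hε)] with y hy
  exact hg x hx y (Metric.mem_ball'.1 hy)

theorem isPrimitive_lineMap {E : Type*} [NormedAddCommGroup E] [NormedSpace ℝ E]
    {L : C(I, X) → Q} {f : C(E, X)} {g : E → Q} {r : ℝ}
    (hg : ∀ x ∈ Metric.ball 0 r, ∀ᶠ y in 𝓝 x, L (f.comp (chord x y)) * g x = g y)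
    {a b : E} (ha : a ∈ Metric.ball 0 r) (hb : b ∈ Metric.ball 0 r) :
    IsPrimitive L (f.comp ⟨AffineMap.lineMap a b, AffineMap.lineMap_continuous⟩)
      (g ∘ AffineMap.lineMap a b) := by
  intro s hs
  have hs' := (convex_ball 0 r).lineMap_mem ha hb hs
  filter_upwards [AffineMap.lineMap_continuous.continuousAt.eventually (hg _ hs')] with t ht
  have hchord : (f.comp ⟨AffineMap.lineMap a b, AffineMap.lineMap_continuous⟩).comp (chord s t) =
      f.comp (chord (AffineMap.lineMap a b s) (AffineMap.lineMap a b t)) :=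
    ContinuousMap.ext fun u => congrArg f ((AffineMap.lineMap a b).apply_lineMap s t (u : ℝ))
  rwa [hchord]

theorem Holonomy.isPrimitive {L : C(I, X) → Q} {W : Set X} (Φ : Holonomy W Q)
    (hΦ : ∀ γ : C(I, W), Φ γ = L (.comp ⟨_, continuous_subtype_val⟩ γ)) (f : C(ℝ, W)) :
    IsPrimitive L (.comp ⟨_, continuous_subtype_val⟩ f) fun t => Φ (f.comp (chord 0 t)) :=
  fun a _ => .of_forall fun b => by
    rw [ContinuousMap.comp_assoc, ← hΦ]
    exact Φ.map_triangle f 0 a b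

theorem IsLocallyHolonomy.exists_holonomy {L : C(I, X) → Q} (hL : IsLocallyHolonomy L) :
    ∃ Φ : Holonomy X Q, ∀ x, ∃ W ∈ 𝓝 x, ∀ γ : C(I, X), (∀ t, γ t ∈ W) → Φ γ = L γ := by
  have exists_prim (f : C(ℝ, X)) : ∃ g, IsPrimitive L f g := by
    obtain ⟨g, hg⟩ := hL.exists_eventually_mul_eq f 2
    exact ⟨g, fun a ha => hg a (by simpa [abs_of_nonneg ha.1] using ha.2.trans_lt one_lt_two)⟩
  choose g hg using exists_prim
  let ext (γ : C(I, X)) : C(ℝ, X) := ContinuousMap.IccExtend zero_le_one γ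
  let Φ : Holonomy X Q := ⟨fun γ => g (ext γ) 1 * (g (ext γ) 0)⁻¹, fun f => by
    obtain ⟨G, hG⟩ := hL.exists_eventually_mul_eq f 2
    have value (a b : ℝ × ℝ) (ha : a ∈ Metric.ball 0 2) (hb : b ∈ Metric.ball 0 2) :
        g (ext (f.comp (chord a b))) 1 * (g (ext (f.comp (chord a b))) 0)⁻¹ = G b * (G a)⁻¹ := by
      have h := (hg _).increment_eq (isPrimitive_lineMap hG ha hb)
        ((IccExtend_comp_chord (f.comp (chord a b))).trans (ContinuousMap.ext fun t => by simp))
      simpa using h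
    rw [value _ _ _ _, value _ _ _ _, value _ _ _ _]
    · group
    all_goals simp [Prod.norm_def]⟩
  refine ⟨Φ, fun x => ?_⟩
  obtain ⟨W, hW, Ψ, hΨ⟩ := hL x
  refine ⟨W, hW, fun γ hγ => ?_⟩
  let γW : C(I, W) := ⟨fun t => ⟨γ t, hγ t⟩, by fun_prop⟩
  have h := (hg (ext γ)).increment_eq (Ψ.isPrimitive hΨ (.IccExtend zero_le_one γW)) rfl
  rw [Ψ.map_chord_self, inv_one, mul_one, IccExtend_comp_chord, hΨ] at h
  exact h

theorem Holonomy.exists_local_of_isOpenEmbedding {U : Type*} [TopologicalSpace U] {i : C(U, X)}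
    (hi : IsOpenEmbedding i) (Φ : Holonomy U Q) {L : C(I, X) → Q}
    (hL : ∀ γ : C(I, U), L (i.comp γ) = Φ γ) {x : X} (hx : x ∈ range i) :
    ∃ W ∈ 𝓝 x, ∃ Ψ : Holonomy W Q,
      ∀ γ : C(I, W), Ψ γ = L (.comp ⟨_, continuous_subtype_val⟩ γ) := by
  let e := hi.isEmbedding.toHomeomorph
  refine ⟨range i, hi.isOpen_range.mem_nhds hx, Φ.comap ⟨_, e.symm.continuous⟩, fun γ => ?_⟩
  refine (hL _).symm.trans (congrArg L (ContinuousMap.ext fun t => ?_))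
  exact congrArg Subtype.val (e.apply_symm_apply (γ t))

theorem Holonomy.exists_glue {U V : Type*} [TopologicalSpace U] [TopologicalSpace V]
    {i : C(U, X)} {j : C(V, X)} (hi : IsOpenEmbedding i) (hj : IsOpenEmbedding j)
    (hcover : range i ∪ range j = univ) (Φ : Holonomy U Q) (Ψ : Holonomy V Q)
    (hagree : ∀ (γ : C(I, U)) (δ : C(I, V)), i.comp γ = j.comp δ → Φ γ = Ψ δ) :
    ∃ Θ : Holonomy X Q, ∀ γ : C(I, U), Θ (i.comp γ) = Φ γ := by
  let L : C(I, X) → Q := Function.extend (i.comp ·) Φ (Function.extend (j.comp ·) Ψ 1)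
  have hLi (γ : C(I, U)) : L (i.comp γ) = Φ γ :=
    Function.Injective.extend_apply (fun _ _ => (ContinuousMap.cancel_left hi.injective).1) _ _ _
  have hLj (δ : C(I, V)) : L (j.comp δ) = Ψ δ := by
    by_cases h : ∃ γ : C(I, U), i.comp γ = j.comp δ
    · obtain ⟨γ, hγ⟩ := h
      rw [← hγ, hLi, hagree γ δ hγ]
    · exact (Function.extend_apply' _ _ _ h).trans <|
        Function.Injective.extend_apply (fun _ _ => (ContinuousMap.cancel_left hj.injective).1)
          _ _ _
  obtain ⟨Θ, hΘ⟩ := IsLocallyHolonomy.exists_holonomy (L := L) fun x =>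
    (hcover.ge (mem_univ x)).elim (Φ.exists_local_of_isOpenEmbedding hi hLi)
      (Ψ.exists_local_of_isOpenEmbedding hj hLj)
  refine ⟨Θ, curve_induction (fun f a b c hab hbc => ?_) fun u => ?_⟩
  · rw [← Φ.map_triangle f a b c, ← hab, ← hbc]
    exact (Θ.map_triangle (i.comp f) a b c).symm
  · obtain ⟨W, hW, hWΘ⟩ := hΘ (i u)
    exact ⟨i ⁻¹' W, i.continuous.continuousAt hW, fun γ hγ => (hWΘ _ hγ).trans (hLi γ)⟩

end Gluing

section VanKampen

variable {C U V X : Type*} [TopologicalSpace C] [TopologicalSpace U] [TopologicalSpace V]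
  [TopologicalSpace X]

/-- The space `X` is the union of two open subspaces `U` and `V` with intersection `C`; all four are
types of their own, related by `i`, `j`, `p` and `q`. -/
structure IsOpenCoverSquare (i : C(U, X)) (j : C(V, X)) (p : C(C, U)) (q : C(C, V)) : Prop where
  isOpenEmbedding_left : IsOpenEmbedding i
  isOpenEmbedding_right : IsOpenEmbedding j
  isEmbedding : IsEmbedding q
  range_union_range : range i ∪ range j = univ
  comp_eq_comp : i.comp p = j.comp q
  mem_range : ∀ v, j v ∈ range i → v ∈ range q

theorem exists_framing [PathConnectedSpace X] (b : X) :
    ∃ k : ∀ x, FundamentalGroupoid.mk b ⟶ FundamentalGroupoid.mk x, k b = 𝟙 _ :=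
  ⟨Function.update (fun x => pathClass (PathConnectedSpace.somePath b x)) b (𝟙 _),
    Function.update_self ..⟩

theorem exists_framing_extending [PathConnectedSpace U] {p : C(C, U)}
    (hp : Function.Injective p) {c₀ : C}
    (k : ∀ c, FundamentalGroupoid.mk c₀ ⟶ FundamentalGroupoid.mk c) :
    ∃ l : ∀ u, FundamentalGroupoid.mk (p c₀) ⟶ FundamentalGroupoid.mk u,
      ∀ c, l (p c) = (FundamentalGroupoid.map p).map (k c) := by
  have extends_at (u : U) : ∃ l : FundamentalGroupoid.mk (p c₀) ⟶ FundamentalGroupoid.mk u,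
      ∀ c, p c = u → l ≍ (FundamentalGroupoid.map p).map (k c) := by
    by_cases hu : ∃ c, p c = u
    · obtain ⟨c, rfl⟩ := hu
      exact ⟨(FundamentalGroupoid.map p).map (k c), fun c' h => by obtain rfl := hp h; rfl⟩
    · exact ⟨pathClass (PathConnectedSpace.somePath _ _), fun c h => absurd ⟨c, h⟩ hu⟩
  choose l hl using extends_at
  exact ⟨l, fun c => eq_of_heq (hl _ c rfl)⟩

theorem extending_refl {p : C(C, U)} {c₀ : C}
    {k : ∀ c, FundamentalGroupoid.mk c₀ ⟶ FundamentalGroupoid.mk c}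
    {l : ∀ u, FundamentalGroupoid.mk (p c₀) ⟶ FundamentalGroupoid.mk u}
    (hl : ∀ c, l (p c) = (FundamentalGroupoid.map p).map (k c)) (hk : k c₀ = 𝟙 _) :
    l (p c₀) = 𝟙 _ := by
  rw [hl, hk]
  exact (FundamentalGroupoid.map p).map_id _

theorem ofFraming_comp {p : C(C, U)} {c₀ : C}
    {k : ∀ c, FundamentalGroupoid.mk c₀ ⟶ FundamentalGroupoid.mk c}
    {l : ∀ u, FundamentalGroupoid.mk (p c₀) ⟶ FundamentalGroupoid.mk u}
    (hl : ∀ c, l (p c) = (FundamentalGroupoid.map p).map (k c)) (γ : C(I, C)) :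
    Holonomy.ofFraming l (p.comp γ) = FundamentalGroup.map p c₀ (Holonomy.ofFraming k γ) := by
  change l _ ≫ _ ≫ inv (l _) = (FundamentalGroupoid.map p).map (k _ ≫ _ ≫ inv (k _))
  simp only [Functor.map_comp, Functor.map_inv, ← hl]
  rfl

theorem ofFraming_loop {b : X} {k : ∀ x, FundamentalGroupoid.mk b ⟶ FundamentalGroupoid.mk x}
    (hk : k b = 𝟙 _) (γ : Path b b) :
    Holonomy.ofFraming k γ = loopClass γ := by
  rw [Holonomy.ofFraming_apply, hk, IsIso.inv_id, Category.id_comp, Category.comp_id]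
  rfl

theorem exists_comp_eq {Y : Type*} [TopologicalSpace Y] {i : C(U, X)} (hi : IsEmbedding i)
    {f : C(Y, X)} (hf : ∀ y, f y ∈ range i) : ∃ g : C(Y, U), i.comp g = f :=
  ⟨.comp ⟨_, hi.toHomeomorph.symm.continuous⟩ ⟨fun y => ⟨f y, hf y⟩, by fun_prop⟩,
    ContinuousMap.ext fun _ => congrArg Subtype.val (hi.toHomeomorph.apply_symm_apply _)⟩

theorem exists_homotopic_of_full {q : C(C, V)} (hfull : (FundamentalGroupoid.map q).Full) {c c' : C}
    (δ : Path (q c) (q c')) : ∃ γ : Path c c', (γ.map q.continuous).Homotopic δ := by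
  obtain ⟨a, ha⟩ := hfull.map_surjective (pathClass δ)
  obtain ⟨γ, rfl⟩ := Path.Homotopic.Quotient.mk_surjective a
  exact ⟨γ, Path.Homotopic.Quotient.eq.1 ha⟩

theorem Holonomy.mem_of_gauge {Q : Type*} [Group Q] (Φ : Holonomy X Q) (S : Subgroup Q) (a : X → Q)
    (small : ∀ x, ∃ W ∈ 𝓝 x, ∀ γ : C(I, X), (∀ t, γ t ∈ W) → (a (γ 1))⁻¹ * Φ γ * a (γ 0) ∈ S)
    (γ : C(I, X)) : (a (γ 1))⁻¹ * Φ γ * a (γ 0) ∈ S := by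
  refine curve_induction (P := fun γ => (a (γ 1))⁻¹ * Φ γ * a (γ 0) ∈ S)
    (fun f p q r hpq hqr => ?_) small γ
  have h := S.mul_mem hqr hpq
  rw [← Φ.map_triangle f p q r]
  convert h using 1
  simp [mul_assoc]

namespace IsOpenCoverSquare

variable {i : C(U, X)} {j : C(V, X)} {p : C(C, U)} {q : C(C, V)}

theorem injective_left (h : IsOpenCoverSquare i j p q) : Function.Injective p := by
  refine .of_comp (f := i) ?_
  rw [← ContinuousMap.coe_comp, h.comp_eq_comp]
  exact h.isOpenEmbedding_right.injective.comp h.isEmbedding.injective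

theorem exists_lift (h : IsOpenCoverSquare i j p q) {Y : Type*} [TopologicalSpace Y] {γ : C(Y, U)}
    {δ : C(Y, V)} (hγδ : i.comp γ = j.comp δ) : ∃ ζ : C(Y, C), p.comp ζ = γ ∧ q.comp ζ = δ := by
  obtain ⟨ζ, rfl⟩ := exists_comp_eq h.isEmbedding fun y =>
    h.mem_range (δ y) ⟨γ y, DFunLike.congr_fun hγδ y⟩
  refine ⟨ζ, (ContinuousMap.cancel_left h.isOpenEmbedding_left.injective).1 ?_, rfl⟩
  rw [hγδ, ← ContinuousMap.comp_assoc, h.comp_eq_comp, ContinuousMap.comp_assoc]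

theorem ker_map_le [PathConnectedSpace C] [PathConnectedSpace U] [PathConnectedSpace V]
    (h : IsOpenCoverSquare i j p q) (hfull : (FundamentalGroupoid.map q).Full) {c₀ : C}
    {N : Subgroup (FundamentalGroup U (p c₀))} [N.Normal]
    (hker : (FundamentalGroup.map q c₀).ker ≤ N.comap (FundamentalGroup.map p c₀)) :
    (FundamentalGroup.map i (p c₀)).ker ≤ N := by
  obtain ⟨k, hk⟩ := exists_framing c₀
  obtain ⟨kU, hkU⟩ := exists_framing_extending h.injective_left k
  obtain ⟨kV, hkV⟩ := exists_framing_extending h.isEmbedding.injective k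
  let ρ := (FundamentalGroup.map q c₀).liftOfSurjective hfull.map_surjective
    ⟨(QuotientGroup.mk' N).comp (FundamentalGroup.map p c₀), by
      simpa [← MonoidHom.comap_ker] using hker⟩
  have hρ (a) : ρ (FundamentalGroup.map q c₀ a) = FundamentalGroup.map p c₀ a :=
    MonoidHom.liftOfRightInverse_comp_apply ..
  obtain ⟨Θ, hΘ⟩ := Holonomy.exists_glue h.isOpenEmbedding_left
    h.isOpenEmbedding_right h.range_union_range
    ((Holonomy.ofFraming kU).mapHom (QuotientGroup.mk' N)) ((Holonomy.ofFraming kV).mapHom ρ)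
    fun γ δ hγδ => by
      obtain ⟨ζ, rfl, rfl⟩ := h.exists_lift hγδ
      change QuotientGroup.mk' N (Holonomy.ofFraming kU _) = ρ (Holonomy.ofFraming kV _)
      rw [ofFraming_comp hkU, ofFraming_comp hkV, hρ]
      rfl
  intro a ha
  obtain ⟨γ, rfl⟩ := loopClass_surjective a
  have hnull := loopClass_eq_one_iff.1 ((map_loopClass i γ).symm.trans ha)
  rw [← QuotientGroup.eq_one_iff, ← ofFraming_loop (extending_refl hkU hk) γ]
  exact (hΘ γ).symm.trans ((Θ.map_eq_of_homotopic hnull).trans (Θ.map_const _))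

theorem exists_gauge {Q : Type*} [Group Q] [Nonempty C] [PathConnectedSpace V]
    (h : IsOpenCoverSquare i j p q) (Ψ : Holonomy X Q) : ∃ a : X → Q, (∀ u, a (i u) = 1) ∧
      ∀ v, ∃ c, ∃ β : Path (q c) v, a (j v) = Ψ.comap j β := by
  have value (x : X) : ∃ a, (x ∈ range i → a = 1) ∧
      ∀ v, j v = x → ∃ c, ∃ β : Path (q c) v, a = Ψ.comap j β := by
    by_cases hx : x ∈ range i
    · refine ⟨1, fun _ => rfl, fun v hv => ?_⟩
      obtain ⟨c, rfl⟩ := h.mem_range v (hv ▸ hx)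
      exact ⟨c, .refl _, ((Ψ.comap j).map_const _).symm⟩
    · obtain ⟨v, rfl⟩ := (h.range_union_range.ge (mem_univ x)).resolve_left hx
      let c : C := Classical.arbitrary C
      refine ⟨Ψ.comap j (PathConnectedSpace.somePath (q c) v), (absurd · hx), fun w hw => ?_⟩
      obtain rfl := h.isOpenEmbedding_right.injective hw
      exact ⟨c, _, rfl⟩
  choose a ha_one ha using value
  exact ⟨a, fun u => ha_one _ ⟨u, rfl⟩, fun v => ha _ v rfl⟩

theorem map_surjective [Nonempty C] [PathConnectedSpace U] [PathConnectedSpace V]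
    (h : IsOpenCoverSquare i j p q) (hfull : (FundamentalGroupoid.map q).Full) (u₀ : U) :
    Function.Surjective (FundamentalGroup.map i u₀) := by
  have : PathConnectedSpace X := pathConnectedSpace_iff_univ.2 <| h.range_union_range ▸
    (isPathConnected_range i.continuous).union (isPathConnected_range j.continuous)
      ⟨_, ⟨_, DFunLike.congr_fun h.comp_eq_comp (Classical.arbitrary C)⟩, _, rfl⟩
  obtain ⟨k, hk⟩ := exists_framing u₀
  obtain ⟨l, hl⟩ := exists_framing_extending h.isOpenEmbedding_left.injective k
  let Ψ := Holonomy.ofFraming l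
  let S := (FundamentalGroup.map i u₀).range
  obtain ⟨a, ha_one, ha⟩ := h.exists_gauge Ψ
  have mem_of_U (γ : C(I, U)) : Ψ (i.comp γ) ∈ S := ⟨_, (ofFraming_comp hl γ).symm⟩
  have mem_of_V {c c' : C} (δ : Path (q c) (q c')) : Ψ.comap j δ ∈ S := by
    obtain ⟨γ, hγ⟩ := exists_homotopic_of_full hfull δ
    rw [← (Ψ.comap j).map_eq_of_homotopic hγ]
    convert mem_of_U (p.comp γ) using 1
    rw [← ContinuousMap.comp_assoc, h.comp_eq_comp]
    rfl
  have mem (γ : C(I, X)) : (a (γ 1))⁻¹ * Ψ γ * a (γ 0) ∈ S := by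
    refine Ψ.mem_of_gauge S a (fun x => ?_) γ
    rcases h.range_union_range.ge (mem_univ x) with hx | hx
    · refine ⟨_, h.isOpenEmbedding_left.isOpen_range.mem_nhds hx, fun γ hγ => ?_⟩
      obtain ⟨γ, rfl⟩ := exists_comp_eq h.isOpenEmbedding_left.isEmbedding hγ
      rw [ContinuousMap.comp_apply, ContinuousMap.comp_apply, ha_one, ha_one, inv_one, one_mul,
        mul_one]
      exact mem_of_U γ
    · refine ⟨_, h.isOpenEmbedding_right.isOpen_range.mem_nhds hx, fun γ hγ => ?_⟩
      obtain ⟨γ, rfl⟩ := exists_comp_eq h.isOpenEmbedding_right.isEmbedding hγ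
      obtain ⟨c, β, h₀⟩ := ha (γ 0)
      obtain ⟨c', β', h₁⟩ := ha (γ 1)
      have hmem := mem_of_V ((β.trans ⟨γ, rfl, rfl⟩).trans β'.symm)
      rw [Holonomy.map_trans, Holonomy.map_trans, Holonomy.map_symm, ← mul_assoc] at hmem
      rwa [ContinuousMap.comp_apply, ContinuousMap.comp_apply, h₀, h₁]
  intro b
  obtain ⟨γ, rfl⟩ := loopClass_surjective b
  have hγ : (a (γ 1))⁻¹ * Ψ γ * a (γ 0) ∈ S := mem γ
  rw [γ.source, γ.target, ha_one, inv_one, one_mul, mul_one] at hγ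
  rwa [← ofFraming_loop (extending_refl hl hk) γ]

end IsOpenCoverSquare

end VanKampen

section ProductAndCircle

variable {A B B' : Type*} [TopologicalSpace A] [TopologicalSpace B] [TopologicalSpace B']

theorem full_map_prodMap_id [PathConnectedSpace B'] [SimplyConnectedSpace B] (g : C(B', B)) :
    (FundamentalGroupoid.map ((ContinuousMap.id A).prodMap g)).Full where
  map_surjective {c c'} δ := by
    obtain ⟨⟨a, b⟩⟩ := c
    obtain ⟨⟨a', b'⟩⟩ := c'
    let α : Path.Homotopic.Quotient a a' := Path.Homotopic.projLeft δ
    obtain ⟨α₀, hα₀⟩ := Path.Homotopic.Quotient.mk_surjective α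
    let β := PathConnectedSpace.somePath b b'
    refine ⟨pathClass (α₀.prod β), ?_⟩
    change Path.Homotopic.prod (.mk α₀) (.mk (β.map g.continuous)) = _
    rw [hα₀, Subsingleton.elim (Path.Homotopic.Quotient.mk (β.map g.continuous)) _]
    exact Path.Homotopic.prod_projLeft_projRight δ

/-- The homomorphism induced by the inclusion of the fibre over `a` in a product. -/
noncomputable def fibreHom (a : A) (b : B) :
    FundamentalGroup B b →* FundamentalGroup (A × B) (a, b) :=
  FundamentalGroup.map (.prodMk (.const B a) (.id B)) b

theorem ker_map_fst_le (a : A) (b : B) :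
    (FundamentalGroup.map (ContinuousMap.fst : C(A × B, A)) (a, b)).ker ≤ (fibreHom a b).range := by
  intro c hc
  have hc : Path.Homotopic.projLeft c = Path.Homotopic.Quotient.mk (.refl a) := hc
  obtain ⟨β, hβ⟩ := Path.Homotopic.Quotient.mk_surjective (Path.Homotopic.projRight c)
  refine ⟨loopClass β, ?_⟩
  rw [← Path.Homotopic.prod_projLeft_projRight c, hc, ← hβ]
  rfl

/-- The loop based at `w` that winds once around the origin. -/
noncomputable def circleLoop (w : {z : ℂ // z ≠ 0}) : Path w w where
  toFun t := ⟨Complex.exp (2 * Real.pi * Complex.I * (t : ℝ)) * w,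
    mul_ne_zero (Complex.exp_ne_zero _) w.2⟩
  source' := by simp
  target' := by simp

theorem coe_circleLoop (w : {z : ℂ // z ≠ 0}) (t : I) :
    (circleLoop w t : ℂ) = Complex.exp (2 * Real.pi * Complex.I * (t : ℝ)) * w := rfl

theorem norm_circleLoop (w : {z : ℂ // z ≠ 0}) (t : I) : ‖(circleLoop w t : ℂ)‖ = ‖w.1‖ := by
  rw [coe_circleLoop, norm_mul, Complex.norm_exp]
  simp

theorem circleLoop_one_symm_inv (t : I) :
    (circleLoop ⟨1, one_ne_zero⟩ (σ t) : ℂ)⁻¹ = circleLoop ⟨1, one_ne_zero⟩ t := by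
  rw [coe_circleLoop, coe_circleLoop, mul_one, mul_one, ← Complex.exp_neg,
    ← Complex.exp_periodic (-(2 * Real.pi * Complex.I * (σ t : ℝ)))]
  congr 1
  push_cast [unitInterval.coe_symm_eq]
  ring

theorem exists_winding_equiv (w : {z : ℂ // z ≠ 0}) :
    ∃ ψ : FundamentalGroup {z : ℂ // z ≠ 0} w ≃* Multiplicative ℤ,
      ψ (loopClass (circleLoop w)) = Multiplicative.ofAdd 1 := by
  let a : ℂ := 2 * Real.pi * Complex.I
  let p : C(ℂ, {z : ℂ // z ≠ 0}) := ⟨fun z => ⟨_, z.exp_ne_zero⟩, by fun_prop⟩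
  let hp := Complex.isAddQuotientCoveringMap_exp
  let e : p ⁻¹' {w} := ⟨Complex.log w, Subtype.ext (Complex.exp_log w.2)⟩
  let e' : p ⁻¹' {w} := ⟨a + Complex.log w, Subtype.ext <| by
    simp [p, a, Complex.exp_add, Complex.exp_log w.2]⟩
  let Γ : Path e.1 e'.1 := ⟨⟨fun t => a * (t : ℝ) + Complex.log w, by fun_prop⟩,
    by simp [e], by simp [e']⟩
  have monodromy : hp.isCoveringMap.monodromy (loopClass (circleLoop w)) e = e' := by
    refine hp.isCoveringMap.monodromy_eq_of_map_eq (.mk Γ) (congrArg Path.Homotopic.Quotient.mk ?_)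
    refine Path.ext (funext fun t => Subtype.ext ?_)
    change Complex.exp (a * (t : ℝ) + Complex.log w) = Complex.exp (a * (t : ℝ)) * w
    rw [Complex.exp_add, Complex.exp_log w.2]
  let g : AddSubgroup.zmultiples a := ⟨a, AddSubgroup.mem_zmultiples a⟩
  have hg : hp.fundamentalGroupEquiv e (loopClass (circleLoop w)) =
      MulOpposite.op (Multiplicative.ofAdd g) :=
    hp.fundamentalGroupToMulOpposite_apply_eq_Iff.2 (congrArg Subtype.val monodromy.symm)
  have : Infinite (AddSubgroup.zmultiples a) := (infinite_zmultiples.2 <|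
    not_isOfFinAddOrder_of_isAddTorsionFree Complex.two_pi_I_ne_zero).to_subtype
  have hg_top : AddSubgroup.zmultiples g = ⊤ :=
    (AddSubgroup.eq_top_iff' _).2 fun ⟨_, k, hk⟩ => ⟨k, Subtype.ext hk⟩
  refine ⟨(hp.fundamentalGroupEquiv e).trans (MulOpposite.opMulEquiv.symm.trans
    (intEquivOfZMultiplesEqTop g hg_top).symm.toMultiplicative), ?_⟩
  simp [hg]

end ProductAndCircle

section Tube

variable {A E : Type*} [TopologicalSpace A] [NormedAddCommGroup E] [NormedSpace ℝ E]

/-- Shrinks the fibre `E` of a trivial bundle over `A` to the ball of radius `(R a)⁻¹`. -/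
noncomputable def shrinkFibres (R : C(A, ℝ)) (hR : ∀ a, 0 < R a) : C(A × E, A × E) where
  toFun q := (q.1, (R q.1)⁻¹ • OpenPartialHomeomorph.univUnitBall q.2)
  continuous_toFun := continuous_fst.prodMk <|
    ((R.continuous.comp continuous_fst).inv₀ fun q => (hR q.1).ne').smul <|
      (OpenPartialHomeomorph.univUnitBall.isOpenEmbedding rfl).continuous.comp continuous_snd

theorem isOpenEmbedding_shrinkFibres (R : C(A, ℝ)) (hR : ∀ a, 0 < R a) :
    IsOpenEmbedding (shrinkFibres (E := E) R hR) := by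
  let scale : A × E ≃ₜ A × E :=
    { toFun q := (q.1, (R q.1)⁻¹ • q.2)
      invFun q := (q.1, R q.1 • q.2)
      left_inv q := by simp [smul_smul, (hR q.1).ne']
      right_inv q := by simp [smul_smul, (hR q.1).ne']
      continuous_toFun := continuous_fst.prodMk <|
        ((R.continuous.comp continuous_fst).inv₀ fun q => (hR q.1).ne').smul continuous_snd
      continuous_invFun := by fun_prop }
  exact scale.isOpenEmbedding.comp
    (IsOpenEmbedding.id.prodMap (OpenPartialHomeomorph.univUnitBall.isOpenEmbedding rfl))

theorem norm_shrinkFibres_snd_lt (R : C(A, ℝ)) (hR : ∀ a, 0 < R a) (q : A × E) :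
    R q.1 * ‖(shrinkFibres R hR q).2‖ < 1 := by
  have hq : OpenPartialHomeomorph.univUnitBall q.2 ∈ Metric.ball (0 : E) 1 :=
    OpenPartialHomeomorph.univUnitBall.map_source (mem_univ _)
  rw [mem_ball_zero_iff] at hq
  change R q.1 * ‖(R q.1)⁻¹ • OpenPartialHomeomorph.univUnitBall q.2‖ < 1
  rw [norm_smul, norm_inv, Real.norm_of_nonneg (hR _).le,
    mul_inv_cancel_left₀ (hR _).ne']
  exact hq

theorem exists_shrinkFibres_eq (R : C(A, ℝ)) (hR : ∀ a, 0 < R a) {a : A} {w : E}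
    (hw : R a * ‖w‖ < 1) : ∃ v, shrinkFibres R hR (a, v) = (a, w) := by
  have hball : R a • w ∈ Metric.ball (0 : E) 1 := by
    rwa [mem_ball_zero_iff, norm_smul, Real.norm_of_nonneg (hR a).le]
  refine ⟨OpenPartialHomeomorph.univUnitBall.symm (R a • w), Prod.ext rfl ?_⟩
  change (R a)⁻¹ • OpenPartialHomeomorph.univUnitBall _ = w
  rw [OpenPartialHomeomorph.univUnitBall.right_inv hball, inv_smul_smul₀ (hR a).ne']

theorem shrinkFibres_snd_ne_zero_iff (R : C(A, ℝ)) (hR : ∀ a, 0 < R a) {q : A × E} :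
    (shrinkFibres R hR q).2 ≠ 0 ↔ q.2 ≠ 0 := by
  rw [shrinkFibres, ContinuousMap.coe_mk, smul_ne_zero_iff_right (inv_ne_zero (hR _).ne'),
    ← OpenPartialHomeomorph.univUnitBall_apply_zero (E := E),
    OpenPartialHomeomorph.univUnitBall.injOn.ne_iff (mem_univ _) (mem_univ _),
    OpenPartialHomeomorph.univUnitBall_apply_zero]

end Tube

section Charts

variable {ι : Type*} (m c : ι → ℂ)

/-- The complement in `ℂ²` of the lines `y = m i * x + c i`. -/
def graphCompl : Set (ℂ × ℂ) := {p | ∀ i, p.2 ≠ m i * p.1 + c i}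

/-- The complement in `ℂ²` of the lines `m i * x + c i * y = 1`. These are the lines of
`graphCompl m c` in the chart at infinity with coordinates `x / y` and `1 / y`. -/
def levelCompl : Set (ℂ × ℂ) := {p | ∀ i, m i * p.1 + c i * p.2 ≠ 1}

/-- The part of the line at infinity outside the lines of slopes `m i`, in the coordinate
`x / y`. -/
def slopeCompl : Set ℂ := {x | ∀ i, m i * x ≠ 1}

/-- The change of chart that exchanges the line at infinity with the line `y = 0`. -/
noncomputable def chartSwap (p : ℂ × ℂ) : ℂ × ℂ := (p.1 / p.2, 1 / p.2)

theorem chartSwap_chartSwap {p : ℂ × ℂ} (hp : p.2 ≠ 0) : chartSwap (chartSwap p) = p := by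
  simp [chartSwap, hp]

theorem continuousOn_chartSwap : ContinuousOn chartSwap {p | p.2 ≠ 0} :=
  (continuousOn_fst.div continuousOn_snd fun _ => id).prodMk
    (continuousOn_const.div continuousOn_snd fun _ => id)

variable {m c}

theorem chartSwap_mem_levelCompl_iff {p : ℂ × ℂ} (hp : p.2 ≠ 0) :
    chartSwap p ∈ levelCompl m c ↔ p ∈ graphCompl m c := by
  refine forall_congr' fun i => not_congr ?_
  rw [chartSwap, mul_div_assoc', mul_one_div, ← add_div, div_eq_one_iff_eq hp, eq_comm]

theorem chartSwap_mem_graphCompl_iff {p : ℂ × ℂ} (hp : p.2 ≠ 0) :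
    chartSwap p ∈ graphCompl m c ↔ p ∈ levelCompl m c := by
  rw [← chartSwap_mem_levelCompl_iff (one_div_ne_zero hp), chartSwap_chartSwap hp]

theorem isOpen_graphCompl [Finite ι] : IsOpen (graphCompl m c) := by
  rw [graphCompl, ofPred_forall]
  exact isOpen_iInter_of_finite fun i => isOpen_ne_fun (by fun_prop) (by fun_prop)

theorem isOpen_levelCompl [Finite ι] : IsOpen (levelCompl m c) := by
  rw [levelCompl, ofPred_forall]
  exact isOpen_iInter_of_finite fun i => isOpen_ne_fun (by fun_prop) (by fun_prop)

theorem isOpen_slopeCompl [Finite ι] : IsOpen (slopeCompl m) := by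
  rw [slopeCompl, ofPred_forall]
  exact isOpen_iInter_of_finite fun i => isOpen_ne_fun (by fun_prop) (by fun_prop)

end Charts

section TubeSquare

variable {ι : Type*} {m c : ι → ℂ}

theorem one_sub_mul_ne_zero (x : slopeCompl m) (i : ι) : 1 - m i * x ≠ 0 :=
  sub_ne_zero.2 (x.2 i).symm

/-- Filling in the line at infinity, when `y = 0` is one of the other lines. -/
noncomputable def graphIncl (h0 : ∀ p ∈ graphCompl m c, p.2 ≠ 0) :
    C(graphCompl m c, levelCompl m c) where
  toFun p := ⟨chartSwap p.1, (chartSwap_mem_levelCompl_iff (h0 p.1 p.2)).2 p.2⟩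
  continuous_toFun := (continuousOn_chartSwap.comp_continuous
    continuous_subtype_val fun p => h0 p.1 p.2).subtype_mk _

theorem isOpenEmbedding_graphIncl [Finite ι] (h0 : ∀ p ∈ graphCompl m c, p.2 ≠ 0) :
    IsOpenEmbedding (graphIncl h0) := by
  let e : OpenPartialHomeomorph (ℂ × ℂ) (ℂ × ℂ) :=
    { toFun := chartSwap
      invFun := chartSwap
      source := {p | p.2 ≠ 0}
      target := {p | p.2 ≠ 0}
      map_source' _ := one_div_ne_zero
      map_target' _ := one_div_ne_zero
      left_inv' _ := chartSwap_chartSwap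
      right_inv' _ := chartSwap_chartSwap
      open_source := isOpen_ne_fun continuous_snd continuous_const
      open_target := isOpen_ne_fun continuous_snd continuous_const
      continuousOn_toFun := continuousOn_chartSwap
      continuousOn_invFun := continuousOn_chartSwap }
  exact .of_comp _ isOpen_levelCompl.isOpenEmbedding_subtypeVal <|
    e.isOpenEmbedding_restrict.comp <|
      .inclusion h0 (isOpen_graphCompl.preimage continuous_subtype_val)

variable [Fintype ι] (m c)

/-- The inverse of the radius of the disc over a point of the line `y = 0` that avoids the lines
`m i * x + c i * y = 1`. -/
noncomputable def tubeCurvature : C(slopeCompl m, ℝ) where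
  toFun x := 1 + ∑ i, ‖c i‖ / ‖1 - m i * x‖
  continuous_toFun := continuous_const.add <| continuous_finsetSum _ fun i _ =>
    continuous_const.div (by fun_prop) fun x => norm_ne_zero_iff.2 (one_sub_mul_ne_zero x i)

theorem tubeCurvature_pos (x : slopeCompl m) : 0 < tubeCurvature m c x :=
  add_pos_of_pos_of_nonneg one_pos (Finset.sum_nonneg fun _ _ => by positivity)

/-- The product with `ℂ` of the line `y = 0` minus the other lines, embedded in the plane as a tube
of varying radius. -/
noncomputable def tube : C(slopeCompl m × ℂ, ℂ × ℂ) :=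
  (ContinuousMap.prodMap ⟨_, continuous_subtype_val⟩ (.id ℂ)).comp
    (shrinkFibres (tubeCurvature m c) (tubeCurvature_pos m c))

variable {m c}

theorem mem_levelCompl_of_tubeCurvature_lt {x : slopeCompl m} {y : ℂ}
    (hy : tubeCurvature m c x * ‖y‖ < 1) : (x.1, y) ∈ levelCompl m c := by
  intro i hi
  have hx : 0 < ‖1 - m i * x‖ := norm_pos_iff.2 (one_sub_mul_ne_zero x i)
  have hterm : ‖c i‖ / ‖1 - m i * x‖ ≤ tubeCurvature m c x :=
    (Finset.single_le_sum (f := fun i => ‖c i‖ / ‖1 - m i * x‖) (fun _ _ => by positivity)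
      (Finset.mem_univ i)).trans (le_add_of_nonneg_left zero_le_one)
  have hnorm : ‖c i‖ * ‖y‖ = ‖1 - m i * x‖ := by
    rw [← norm_mul]
    exact congrArg _ (eq_sub_of_add_eq' hi)
  have hlt := (mul_le_mul_of_nonneg_right hterm (norm_nonneg y)).trans_lt hy
  rw [div_mul_eq_mul_div, hnorm, div_self hx.ne'] at hlt
  exact hlt.false

theorem tube_mem_levelCompl (v : slopeCompl m × ℂ) : tube m c v ∈ levelCompl m c :=
  mem_levelCompl_of_tubeCurvature_lt (norm_shrinkFibres_snd_lt _ (tubeCurvature_pos m c) v)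

theorem tube_snd_ne_zero_iff {v : slopeCompl m × ℂ} : (tube m c v).2 ≠ 0 ↔ v.2 ≠ 0 :=
  shrinkFibres_snd_ne_zero_iff _ (tubeCurvature_pos m c)

theorem isOpenEmbedding_tube : IsOpenEmbedding (tube m c) :=
  (isOpen_slopeCompl.isOpenEmbedding_subtypeVal.prodMap .id).comp
    (isOpenEmbedding_shrinkFibres _ (tubeCurvature_pos m c))

theorem exists_tube_eq {x : slopeCompl m} {y : ℂ} (hy : tubeCurvature m c x * ‖y‖ < 1) :
    ∃ w, tube m c (x, w) = (x.1, y) := by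
  obtain ⟨w, hw⟩ := exists_shrinkFibres_eq _ (tubeCurvature_pos m c) hy
  exact ⟨w, congrArg (Prod.map Subtype.val id) hw⟩

variable (m c)

/-- The tube around `y = 0` as a map into `levelCompl m c`. -/
noncomputable def tubeIncl : C(slopeCompl m × ℂ, levelCompl m c) where
  toFun v := ⟨tube m c v, tube_mem_levelCompl v⟩

/-- The punctured tube around `y = 0`, seen in the other chart. -/
noncomputable def puncturedTubeIncl : C(slopeCompl m × {w : ℂ // w ≠ 0}, graphCompl m c) where
  toFun v := ⟨chartSwap (tube m c (v.1, v.2)), (chartSwap_mem_graphCompl_iff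
    (tube_snd_ne_zero_iff.2 v.2.2)).2 (tube_mem_levelCompl _)⟩
  continuous_toFun := (continuousOn_chartSwap.comp_continuous (by fun_prop)
    fun v => tube_snd_ne_zero_iff.2 v.2.2).subtype_mk _

/-- The inclusion of punctured fibres in fibres. -/
noncomputable def fillIncl : C(slopeCompl m × {w : ℂ // w ≠ 0}, slopeCompl m × ℂ) :=
  (ContinuousMap.id _).prodMap ⟨_, continuous_subtype_val⟩

variable {m c}

theorem isOpenCoverSquare_tube (h0 : ∀ p ∈ graphCompl m c, p.2 ≠ 0) :
    IsOpenCoverSquare (graphIncl h0) (tubeIncl m c) (puncturedTubeIncl m c) (fillIncl m) where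
  isOpenEmbedding_left := isOpenEmbedding_graphIncl h0
  isOpenEmbedding_right :=
    .of_comp _ isOpen_levelCompl.isOpenEmbedding_subtypeVal isOpenEmbedding_tube
  isEmbedding := IsEmbedding.id.prodMap .subtypeVal
  range_union_range := eq_univ_of_forall fun p => by
    by_cases hp : p.1.2 = 0
    · have hx : p.1.1 ∈ slopeCompl m := fun i => by simpa [hp] using p.2 i
      obtain ⟨w, hw⟩ := exists_tube_eq (c := c) (x := ⟨_, hx⟩) (y := p.1.2) (by simp [hp])
      exact .inr ⟨_, Subtype.ext hw⟩
    · exact .inl ⟨⟨chartSwap p.1, (chartSwap_mem_graphCompl_iff hp).2 p.2⟩,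
        Subtype.ext (chartSwap_chartSwap hp)⟩
  comp_eq_comp := ContinuousMap.ext fun v =>
    Subtype.ext (chartSwap_chartSwap (tube_snd_ne_zero_iff (v := (v.1, v.2.1)).2 v.2.2))
  mem_range v := by
    rintro ⟨p, hp⟩
    have hv : (tube m c v).2 ≠ 0 := by
      have hsnd : (chartSwap p.1).2 = (tube m c v).2 := congrArg (fun q => q.1.2) hp
      exact hsnd ▸ one_div_ne_zero (h0 p.1 p.2)
    exact ⟨(v.1, ⟨v.2, tube_snd_ne_zero_iff.1 hv⟩), rfl⟩

end TubeSquare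

section Connectedness

theorem countable_setOf_exists_mul_eq {ι : Type*} [Countable ι] {a k : ι → ℂ} {z : ℂ}
    (hz : ∀ i, a i * z ≠ k i) : {t | ∃ i, a i * t = k i}.Countable := by
  refine (countable_range fun i => k i / a i).mono ?_
  rintro t ⟨i, ht⟩
  have ha : a i ≠ 0 := fun ha => hz i (by rw [← ht, ha, zero_mul, zero_mul])
  exact ⟨i, (eq_div_of_mul_eq ha (mul_comm (a i) t ▸ ht)).symm⟩

theorem isPathConnected_forall_apply_ne {ι E : Type*} [Countable ι] [AddCommGroup E] [Module ℂ E]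
    [TopologicalSpace E] [IsTopologicalAddGroup E] [ContinuousSMul ℂ E] (f : ι → E →ₗ[ℂ] ℂ)
    (k : ι → ℂ) (hne : {p | ∀ i, f i p ≠ k i}.Nonempty) :
    IsPathConnected {p | ∀ i, f i p ≠ k i} := by
  refine isPathConnected_iff.2 ⟨hne, fun p hp q hq => ?_⟩
  let line : C(ℂ, E) := ⟨AffineMap.lineMap p q, AffineMap.lineMap_continuous⟩
  let bad : Set ℂ := {t | ∃ i, f i (q - p) * t = k i - f i p}
  have mem_bad {t : ℂ} {i : ι} : f i (q - p) * t = k i - f i p ↔ f i (line t) = k i := by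
    simp [line, AffineMap.lineMap_apply_module', eq_sub_iff_add_eq, mul_comm]
  have hbad : bad.Countable := countable_setOf_exists_mul_eq (z := 0) fun i =>
    fun h => hp i (by simpa [line] using mem_bad.1 h)
  have hconn := hbad.isPathConnected_compl_of_one_lt_rank
    (Complex.rank_real_complex ▸ Nat.one_lt_ofNat)
  have hjoin := (hconn.joinedIn 0 (fun ⟨i, hi⟩ => hp i (by simpa [line] using mem_bad.1 hi)) 1
    (by simpa [bad, mem_bad, line] using hq)).map line.continuous
  refine JoinedIn.mono (by simpa [line] using hjoin) ?_
  rintro _ ⟨t, ht, rfl⟩ i hi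
  exact ht ⟨i, mem_bad.2 hi⟩

variable {ι : Type*} [Finite ι] {m c : ι → ℂ}

instance : PathConnectedSpace (slopeCompl m) :=
  isPathConnected_iff_pathConnectedSpace.1 <|
    isPathConnected_forall_apply_ne (fun i => LinearMap.mulLeft ℂ (m i)) 1 ⟨0, by simp⟩

instance : PathConnectedSpace (levelCompl m c) :=
  isPathConnected_iff_pathConnectedSpace.1 <| isPathConnected_forall_apply_ne
    (fun i => m i • LinearMap.fst ℂ ℂ ℂ + c i • LinearMap.snd ℂ ℂ ℂ) 1 ⟨0, by simp⟩

instance : PathConnectedSpace (graphCompl m c) := by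
  obtain ⟨y, hy⟩ := (finite_range c).exists_notMem
  have hy (i : ι) : y ≠ c i := fun h => hy ⟨i, h.symm⟩
  refine isPathConnected_iff_pathConnectedSpace.1 ?_
  simpa [graphCompl, sub_eq_iff_eq_add'] using isPathConnected_forall_apply_ne
    (fun i => LinearMap.snd ℂ ℂ ℂ - m i • LinearMap.fst ℂ ℂ ℂ) c ⟨(0, y), by simpa using hy⟩

instance : PathConnectedSpace {w : ℂ // w ≠ 0} :=
  isPathConnected_iff_pathConnectedSpace.1 <| isPathConnected_compl_singleton_of_one_lt_rank
    (Complex.rank_real_complex ▸ Nat.one_lt_ofNat) 0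

end Connectedness

section FillingIn

theorem map_graphIncl_surjective {ι : Type*} [Finite ι] {m c : ι → ℂ}
    (h0 : ∀ p ∈ graphCompl m c, p.2 ≠ 0) (b : graphCompl m c) :
    Function.Surjective (FundamentalGroup.map (graphIncl h0) b) :=
  have := Fintype.ofFinite ι
  (isOpenCoverSquare_tube h0).map_surjective (full_map_prodMap_id _) b

theorem tube_norm_one_mul {ι : Type*} [Fintype ι] {m c : ι → ℂ} (x : slopeCompl m) {u : ℂ}
    (hu : ‖u‖ = 1) (w : ℂ) : tube m c (x, u * w) = (x.1, u * (tube m c (x, w)).2) := by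
  simp [tube, shrinkFibres, OpenPartialHomeomorph.univUnitBall_apply, hu, mul_left_comm]

variable {ι : Type*} [Fintype ι] (m c : ι → ℂ) (x : slopeCompl m) (w : {w : ℂ // w ≠ 0})

theorem puncturedTubeIncl_norm_one_mul {u : ℂ} (hu : ‖u‖ = 1) (hw : u * w ≠ 0) :
    (puncturedTubeIncl m c (x, ⟨u * w, hw⟩)).1 = u⁻¹ • (puncturedTubeIncl m c (x, w)).1 := by
  change chartSwap (tube m c (x, u * w)) = u⁻¹ • chartSwap (tube m c (x, w))
  rw [tube_norm_one_mul x hu]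
  change chartSwap (x.1, u * (tube m c (x, w)).2) = u⁻¹ • chartSwap (x.1, (tube m c (x, w)).2)
  simp [chartSwap, div_eq_mul_inv, mul_left_comm, mul_comm]

theorem puncturedTubeIncl_circleLoop (t : I) : (puncturedTubeIncl m c (x, circleLoop w t)).1 =
    (circleLoop ⟨1, one_ne_zero⟩ t : ℂ)⁻¹ • (puncturedTubeIncl m c (x, w)).1 := by
  have hw : circleLoop w t = ⟨circleLoop ⟨1, one_ne_zero⟩ t * w,
      mul_ne_zero (circleLoop _ t).2 w.2⟩ := Subtype.ext (by simp [coe_circleLoop])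
  rw [hw]
  exact puncturedTubeIncl_norm_one_mul m c x w (by simp [norm_circleLoop]) _

/-- The class of a loop around the line at infinity, in a fibre of the punctured tube. -/
noncomputable def meridian : FundamentalGroup (graphCompl m c) (puncturedTubeIncl m c (x, w)) :=
  loopClass ((circleLoop w).map (f := fun w => puncturedTubeIncl m c (x, w)) (by fun_prop))

variable {m c}

theorem meridian_mem_ker (h0 : ∀ p ∈ graphCompl m c, p.2 ≠ 0) :
    meridian m c x w ∈
      (FundamentalGroup.map (graphIncl h0) (puncturedTubeIncl m c (x, w))).ker := by
  let fibre : C((univ : Set ℂ), levelCompl m c) :=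
    (tubeIncl m c).comp (.prodMk (.const _ x) ⟨_, continuous_subtype_val⟩)
  let circle : C(I, (univ : Set ℂ)) := ⟨fun t => ⟨circleLoop w t, trivial⟩, by fun_prop⟩
  obtain ⟨k, hk⟩ := exists_framing (graphIncl h0 (puncturedTubeIncl m c (x, w)))
  let γ := ((circleLoop w).map (f := fun w => puncturedTubeIncl m c (x, w)) (by fun_prop)).map
    (graphIncl h0).continuous
  have hγ : (γ : C(I, levelCompl m c)) = fibre.comp circle := ContinuousMap.ext fun t =>
    DFunLike.congr_fun (isOpenCoverSquare_tube h0).comp_eq_comp (x, circleLoop w t)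
  change loopClass γ = 1
  rw [← ofFraming_loop hk, hγ]
  exact (Holonomy.map_eq_of_convex _ convex_univ fibre (γ := circle) (δ := .const I (circle 0)) rfl
    (Subtype.ext (by simp [circle]))).trans (Holonomy.map_const (.ofFraming k) (fibre (circle 0)))

theorem ker_map_graphIncl (h0 : ∀ p ∈ graphCompl m c, p.2 ≠ 0)
    (hcentral : meridian m c x w ∈ Subgroup.center _) :
    (FundamentalGroup.map (graphIncl h0) (puncturedTubeIncl m c (x, w))).ker =
      Subgroup.zpowers (meridian m c x w) := by
  have : (Subgroup.zpowers (meridian m c x w)).Normal :=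
    ⟨fun z hz g => by
      rwa [Subgroup.mem_center_iff.1 (Subgroup.zpowers_le.2 hcentral hz) g, mul_inv_cancel_right]⟩
  apply le_antisymm
  · refine (isOpenCoverSquare_tube h0).ker_map_le (full_map_prodMap_id _) (c₀ := (x, w)) ?_
    intro g hg
    have hfst : g ∈ (FundamentalGroup.map ContinuousMap.fst (x, w)).ker := by
      obtain ⟨γ, rfl⟩ := loopClass_surjective g
      exact congrArg (FundamentalGroup.map ContinuousMap.fst (x, w.1)) hg
    obtain ⟨β, rfl⟩ := ker_map_fst_le x w hfst
    obtain ⟨ψ, hψ⟩ := exists_winding_equiv w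
    obtain ⟨n, rfl⟩ : ∃ n : ℤ, loopClass (circleLoop w) ^ n = β :=
      ⟨(ψ β).toAdd, ψ.injective (by simp [hψ, ← ofAdd_zsmul])⟩
    rw [Subgroup.mem_comap, map_zpow, map_zpow]
    exact ⟨n, rfl⟩
  · exact Subgroup.zpowers_le.2 (meridian_mem_ker x w h0)

theorem exists_winding_meridian (h0 : ∀ p ∈ graphCompl m c, p.2 ≠ 0) :
    ∃ ψ : FundamentalGroup (graphCompl m c) (puncturedTubeIncl m c (x, w)) →* Multiplicative ℤ,
      ψ (meridian m c x w)⁻¹ = .ofAdd 1 := by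
  let height : C(graphCompl m c, {z : ℂ // z ≠ 0}) :=
    ⟨fun p => ⟨p.1.2, h0 p.1 p.2⟩, by fun_prop⟩
  obtain ⟨ψ, hψ⟩ := exists_winding_equiv (height (puncturedTubeIncl m c (x, w)))
  refine ⟨ψ.toMonoidHom.comp (FundamentalGroup.map height _),
    (congrArg (ψ ∘ loopClass) (Path.ext (funext fun t => Subtype.ext ?_))).trans hψ⟩
  change (puncturedTubeIncl m c (x, circleLoop w (σ t))).1.2 =
    circleLoop (height (puncturedTubeIncl m c (x, w))) t
  rw [puncturedTubeIncl_circleLoop, circleLoop_one_symm_inv]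
  simp [coe_circleLoop, height]

theorem nonempty_mulEquiv_prod_int {G P : Type*} [Group G] [Group P] (f : G →* P)
    (hf : Function.Surjective f) {z : G} (hker : f.ker = Subgroup.zpowers z)
    (ψ : G →* Multiplicative ℤ) (hψ : ψ z = .ofAdd 1) : Nonempty (G ≃* P × Multiplicative ℤ) := by
  have hψ (n : ℤ) : ψ (z ^ n) = .ofAdd n := by
    rw [map_zpow, hψ, ← ofAdd_zsmul, smul_eq_mul, mul_one]
  refine ⟨.ofBijective (f.prod ψ) ⟨?_, ?_⟩⟩
  · refine (injective_iff_map_eq_one _).2 fun g hg => ?_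
    obtain ⟨hfg, hψg⟩ := Prod.mk.inj hg
    obtain ⟨n, rfl⟩ := Subgroup.mem_zpowers_iff.1 (hker ▸ hfg : g ∈ Subgroup.zpowers z)
    rw [ofAdd_eq_one.1 ((hψ n).symm.trans hψg), zpow_zero]
  · rintro ⟨p, a⟩
    obtain ⟨g, rfl⟩ := hf p
    let n : ℤ := (a / ψ g).toAdd
    have hfz : f (z ^ n) = 1 := MonoidHom.mem_ker.1 (hker ▸ ⟨n, rfl⟩)
    exact ⟨z ^ n * g, Prod.ext (by simp [-map_zpow, hfz]) (by simp [-map_zpow, hψ, n])⟩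

end FillingIn

section FarRegion

variable {ι : Type*} [Fintype ι] (m c : ι → ℂ)

/-- A bound for the second coordinates of the points of the lines over `x`. -/
noncomputable def farBound (x : ℂ) : ℝ := (∑ i, ‖m i‖) * ‖x‖ + ∑ i, ‖c i‖

/-- The points that lie to the right of all lines, in a convex region. -/
def farSet : Set (ℂ × ℂ) := {p | farBound m c p.1 < p.2.re}

theorem continuous_farBound : Continuous (farBound m c) := by
  unfold farBound
  fun_prop

theorem isOpen_farSet : IsOpen (farSet m c) :=
  isOpen_lt ((continuous_farBound m c).comp continuous_fst)
    (Complex.continuous_re.comp continuous_snd)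

theorem convex_farSet : Convex ℝ (farSet m c) := by
  have hnorm : ConvexOn ℝ univ fun p : ℂ × ℂ => ‖p.1‖ :=
    convexOn_univ_norm.comp_linearMap (LinearMap.fst ℝ ℂ ℂ)
  have hre : ConcaveOn ℝ univ fun p : ℂ × ℂ => p.2.re :=
    (Complex.reLm ∘ₗ LinearMap.snd ℝ ℂ ℂ).concaveOn convex_univ
  have hm : 0 ≤ ∑ i, ‖m i‖ := Finset.sum_nonneg fun i _ => norm_nonneg (m i)
  have h := (((hnorm.smul hm).add_const (∑ i, ‖c i‖)).sub hre).convex_lt 0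
  simpa [farSet, farBound, sub_neg] using h

variable {m c}

theorem norm_le_farBound (x : ℂ) (i : ι) : ‖m i * x + c i‖ ≤ farBound m c x := by
  have hm : ‖m i‖ ≤ ∑ i, ‖m i‖ := Finset.single_le_sum (f := fun i => ‖m i‖)
    (fun _ _ => norm_nonneg _) (Finset.mem_univ i)
  have hc : ‖c i‖ ≤ ∑ i, ‖c i‖ := Finset.single_le_sum (f := fun i => ‖c i‖)
    (fun _ _ => norm_nonneg _) (Finset.mem_univ i)
  calc ‖m i * x + c i‖ ≤ ‖m i‖ * ‖x‖ + ‖c i‖ := norm_mul (m i) x ▸ norm_add_le _ _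
    _ ≤ farBound m c x := add_le_add (mul_le_mul_of_nonneg_right hm (norm_nonneg x)) hc

theorem mem_graphCompl_of_farBound_lt {p : ℂ × ℂ} (hp : farBound m c p.1 < ‖p.2‖) :
    p ∈ graphCompl m c :=
  fun i h => (h ▸ hp).not_ge (norm_le_farBound _ i)

theorem farSet_subset_graphCompl : farSet m c ⊆ graphCompl m c := fun _ hp =>
  mem_graphCompl_of_farBound_lt (lt_of_lt_of_le hp (Complex.re_le_norm _))

end FarRegion

section Displacement

variable {ι : Type*} [Fintype ι]

/-- The map is a sum of tents of radius `ρ` over the points `p i`. Its Lipschitz constant is at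
most `(∑ i, ‖v i‖) / ρ`, so that `y ↦ y + a * β y` is injective. -/
theorem exists_displacement {p v : ι → ℂ} {ρ : ℝ} (hρ : 0 < ρ)
    (hp : Pairwise fun i j => ρ ≤ ‖p i - p j‖) : ∃ β : C(ℂ, ℂ),
      (∀ y, (∀ i, ρ ≤ ‖y - p i‖) → β y = 0) ∧
      ∀ a : ℂ, ‖a‖ * ∑ i, ‖v i‖ < ρ → ∀ i y, y ≠ p i → y + a * β y ≠ p i + a * v i := by
  let tent (q y : ℂ) : ℝ := max 0 (1 - ‖y - q‖ / ρ)
  have tent_self (q : ℂ) : tent q q = 1 := by simp [tent]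
  have tent_eq_zero {q y : ℂ} (h : ρ ≤ ‖y - q‖) : tent q y = 0 :=
    max_eq_left (sub_nonpos.2 ((one_le_div hρ).2 h))
  have tent_lipschitz (q y z : ℂ) : |tent q y - tent q z| ≤ ‖y - z‖ / ρ := by
    refine (abs_max_sub_max_le_max _ _ _ _).trans ?_
    rw [sub_self, abs_zero, sub_sub_sub_cancel_left, ← sub_div, abs_div, abs_of_pos hρ,
      max_eq_right (by positivity), norm_sub_rev y z]
    gcongr
    simpa using abs_norm_sub_norm_le (z - q) (y - q)
  refine ⟨⟨fun y => ∑ i, tent (p i) y * v i, by fun_prop⟩, fun y hy => ?_, fun a ha i y hy h => ?_⟩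
  · exact Finset.sum_eq_zero fun i _ => by rw [tent_eq_zero (hy i), Complex.ofReal_zero, zero_mul]
  have value : ∑ j, tent (p j) (p i) * v j = v i := by
    rw [Finset.sum_eq_single i (fun j _ hj => ?_) (by simp), tent_self, Complex.ofReal_one, one_mul]
    rw [tent_eq_zero (hp hj.symm), Complex.ofReal_zero, zero_mul]
  have bound : ‖y - p i‖ * ρ ≤ ‖y - p i‖ * (‖a‖ * ∑ j, ‖v j‖) := by
    have hy : y - p i = a * ∑ j, ((tent (p j) (p i) - tent (p j) y : ℝ) : ℂ) * v j := by
      simp only [Complex.ofReal_sub, sub_mul, Finset.sum_sub_distrib, value]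
      linear_combination h
    have hsum : ‖∑ j, ((tent (p j) (p i) - tent (p j) y : ℝ) : ℂ) * v j‖ ≤
        ‖y - p i‖ / ρ * ∑ j, ‖v j‖ := by
      rw [Finset.mul_sum]
      refine norm_sum_le_of_le _ fun j _ => ?_
      rw [norm_mul, Complex.norm_real, norm_sub_rev y]
      gcongr
      exact tent_lipschitz (p j) (p i) y
    calc ‖y - p i‖ * ρ ≤ ‖a‖ * (‖y - p i‖ / ρ * ∑ j, ‖v j‖) * ρ := by
          gcongr
          exact (congrArg norm hy).trans (norm_mul _ _) |>.trans_le (by gcongr)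
      _ = ‖y - p i‖ * (‖a‖ * ∑ j, ‖v j‖) := by field_simp
  exact ha.not_ge (le_of_mul_le_mul_left bound (norm_pos_iff.2 (sub_ne_zero.2 hy)))

end Displacement

section Fibres

theorem Holonomy.exists_trivial_on {K X : Type*} [TopologicalSpace K] [SimplyConnectedSpace K]
    [TopologicalSpace X] [PathConnectedSpace X] {f : C(K, X)} (hf : Function.Injective f) (b : K) :
    ∃ Φ : Holonomy X (FundamentalGroup X (f b)), (∀ γ : Path (f b) (f b), Φ γ = loopClass γ) ∧
      ∀ γ : C(I, K), Φ (f.comp γ) = 1 := by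
  obtain ⟨k, hk⟩ := exists_framing b
  obtain ⟨l, hl⟩ := exists_framing_extending hf k
  refine ⟨.ofFraming l, ofFraming_loop (extending_refl hl hk), fun γ => ?_⟩
  rw [ofFraming_comp hl, Subsingleton.elim (Holonomy.ofFraming k γ) 1, map_one]

theorem eventually_forall_mem {A K Z : Type*} [TopologicalSpace A] [TopologicalSpace K]
    [CompactSpace K] [TopologicalSpace Z] (f : C(A × K, Z)) {U : Set Z} (hU : IsOpen U) {a : A}
    (ha : ∀ k, f (a, k) ∈ U) : ∀ᶠ a' in 𝓝 a, ∀ k, f (a', k) ∈ U := by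
  simpa using isCompact_univ.eventually_forall_of_forall_eventually (P := fun a k => f (a, k) ∈ U)
    fun k _ => f.continuous.continuousAt.eventually (hU.mem_nhds (ha k))

variable {ι Q : Type*} [Fintype ι] {m c : ι → ℂ} [Group Q] {Φ : Holonomy (graphCompl m c) Q}
  {S : Subgroup Q}

theorem eventually_exists_shear
    (hΦ : ∀ γ : C(I, graphCompl m c), (∀ t, (γ t).1 ∈ farSet m c) → Φ γ = 1)
    (γ : C(I, graphCompl m c)) (h₀ : (γ 0).1 ∈ farSet m c) :
    ∀ᶠ v : ℂ × ℂ in 𝓝 0, ∃ γ' β : C(I, graphCompl m c), (γ' 0).1 ∈ farSet m c ∧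
      (∀ t, (γ' t).1 = (γ t).1 + (v.1, (t : ℝ) • v.2)) ∧ (∀ s, (β s).1 = (γ 1).1 + (s : ℝ) • v) ∧
      Φ γ' = Φ β * Φ γ := by
  let shear : C((ℂ × ℂ) × (I × I), ℂ × ℂ) :=
    ⟨fun p => (γ p.2.2).1 + (p.2.1 : ℝ) • (p.1.1, (p.2.2 : ℝ) • p.1.2), by fun_prop⟩
  let start : C((ℂ × ℂ) × I, ℂ × ℂ) :=
    ⟨fun p => (γ 0).1 + (p.2 : ℝ) • (p.1.1, (0 : ℂ)), by fun_prop⟩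
  filter_upwards [eventually_forall_mem shear (isOpen_graphCompl (m := m) (c := c))
      fun p => by simp [shear, ← Prod.zero_eq_mk],
    eventually_forall_mem start (isOpen_farSet m c)
      fun s => by simpa [start, ← Prod.zero_eq_mk]] with v hv hfar
  let H : C(I × I, graphCompl m c) := ⟨fun p => ⟨shear (v, p), hv p⟩, by fun_prop⟩
  have hα : Φ (H.comp (.prodMk (.id I) (.const I 0))) = 1 :=
    hΦ _ fun s => by simpa [H, shear, start] using hfar s
  have hsquare := Φ.map_square H (γ₀ := γ) (γ₁ := H.comp (.prodMk (.const I 1) (.id I)))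
    (α := H.comp (.prodMk (.id I) (.const I 0))) (β := H.comp (.prodMk (.id I) (.const I 1)))
    (fun t => Subtype.ext (by simp [H, shear])) (fun _ => rfl) (fun _ => rfl) (fun _ => rfl)
  rw [hα, mul_one] at hsquare
  exact ⟨_, _, by simpa [H, shear, start] using hfar 1, fun t => by simp [H, shear],
    fun s => by simp [H, shear, Prod.ext_iff], hsquare⟩

variable (Φ S) in
/-- The curves in the fibre over `x` that start and end in the far region have values in `S`. -/
def VerticalIn (x : ℂ) : Prop :=
  ∀ γ : C(I, graphCompl m c), (∀ t, (γ t).1.1 = x) → (γ 0).1 ∈ farSet m c →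
    (γ 1).1 ∈ farSet m c → Φ γ ∈ S

theorem isClosed_setOf_verticalIn
    (hΦ : ∀ γ : C(I, graphCompl m c), (∀ t, (γ t).1 ∈ farSet m c) → Φ γ = 1) :
    IsClosed {x | VerticalIn Φ S x} := by
  refine isClosed_iff_frequently.2 fun x hx γ hγ h₀ h₁ => ?_
  let finish : C((ℂ × ℂ) × I, ℂ × ℂ) := ⟨fun p => (γ 1).1 + (p.2 : ℝ) • p.1, by fun_prop⟩
  have hnear := (eventually_exists_shear hΦ γ h₀).and
    (eventually_forall_mem finish (isOpen_farSet m c) fun s => by simpa [finish])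
  have hshift : Tendsto (fun y : ℂ => (y - x, (0 : ℂ))) (𝓝 x) (𝓝 0) :=
    Continuous.tendsto' (by fun_prop) _ _ (by simp)
  obtain ⟨y, hy, ⟨γ', β, hγ'₀, hγ', hβ, heq⟩, hfinish⟩ :=
    (hx.and_eventually (hshift.eventually hnear)).exists
  rw [hΦ β fun s => by simpa [hβ, finish] using hfinish s, one_mul] at heq
  exact heq ▸ hy γ' (fun t => by simp [hγ', hγ]) hγ'₀ (by simpa [hγ', finish] using hfinish 1)

theorem verticalIn_of_loops
    (hΦ : ∀ γ : C(I, graphCompl m c), (∀ t, (γ t).1 ∈ farSet m c) → Φ γ = 1)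
    {p : graphCompl m c} (hp : p.1 ∈ farSet m c)
    (h : ∀ γ : Path p p, (∀ t, (γ t).1.1 = p.1.1) → Φ γ ∈ S) : VerticalIn Φ S p.1.1 := by
  have segment (q : graphCompl m c) (hq : q.1 ∈ farSet m c) (hqp : q.1.1 = p.1.1) :
      ∃ δ : Path p q, (∀ t, (δ t).1.1 = p.1.1) ∧ Φ δ = 1 := by
    have hmem (t : I) : AffineMap.lineMap p.1 q.1 (t : ℝ) ∈ farSet m c :=
      (convex_farSet m c).lineMap_mem hp hq t.2
    let δ : Path p q :=
      { toFun t := ⟨_, farSet_subset_graphCompl (hmem t)⟩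
        continuous_toFun := (AffineMap.lineMap_continuous.comp continuous_subtype_val).subtype_mk _
        source' := Subtype.ext (by simp)
        target' := Subtype.ext (by simp) }
    exact ⟨δ, fun t => by simp [δ, AffineMap.lineMap_apply, hqp], hΦ _ hmem⟩
  intro γ hγ h₀ h₁
  obtain ⟨δ₀, hδ₀, hΦδ₀⟩ := segment (γ 0) h₀ (hγ 0)
  obtain ⟨δ₁, hδ₁, hΦδ₁⟩ := segment (γ 1) h₁ (hγ 1)
  have hloop := h ((δ₀.trans ⟨γ, rfl, rfl⟩).trans δ₁.symm) fun t => by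
    simp only [Path.trans_apply]
    split_ifs <;> simp [hδ₀, hδ₁, hγ]
  rwa [Φ.map_trans, Φ.map_trans, Φ.map_symm, hΦδ₀, hΦδ₁, inv_one, one_mul, mul_one] at hloop

end Fibres

section GenericFibres

variable {ι : Type*} {m c : ι → ℂ}

variable (m c) in
/-- The points `x` over which the lines `y = m i * x + c i` are distinct. -/
def genericSet : Set ℂ := {x | Function.Injective fun i => m i * x + c i}

theorem genericSet_eq_setOf_forall_ne : genericSet m c = {x | ∀ p : {p : ι × ι // p.1 ≠ p.2},
    (m p.1.1 - m p.1.2) * x ≠ c p.1.2 - c p.1.1} := by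
  ext x
  have iff_eq (i j : ι) :
      (m i - m j) * x = c j - c i ↔ m i * x + c i = m j * x + c j := by
    constructor <;> intro h <;> linear_combination h
  simp [genericSet, Function.Injective, iff_eq, not_imp_not]

theorem isPathConnected_genericSet [Countable ι] (hne : (genericSet m c).Nonempty) :
    IsPathConnected (genericSet m c) := by
  rw [genericSet_eq_setOf_forall_ne] at hne ⊢
  exact isPathConnected_forall_apply_ne
    (fun p : {p : ι × ι // p.1 ≠ p.2} => LinearMap.mulLeft ℂ (m p.1.1 - m p.1.2)) _ hne

theorem dense_genericSet [Countable ι] (hne : (genericSet m c).Nonempty) :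
    Dense (genericSet m c) := by
  rw [genericSet_eq_setOf_forall_ne] at hne ⊢
  convert (countable_setOf_exists_mul_eq hne.some_mem).dense_compl ℝ using 1
  ext x
  simp

theorem exists_pos_eventually_pairwise_le [Finite ι] {x : ℂ} (hx : x ∈ genericSet m c) :
    ∃ ρ > 0, ∀ᶠ y in 𝓝 x,
      Pairwise fun i j => ρ ≤ ‖(m i * y + c i) - (m j * y + c j)‖ := by
  have hpos (i j : ι) : ∀ᶠ ρ in 𝓝[>] (0 : ℝ),
      i ≠ j → ρ < ‖(m i * x + c i) - (m j * x + c j)‖ := by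
    by_cases hij : i = j
    · simp [hij]
    · filter_upwards [nhdsWithin_le_nhds <|
        eventually_lt_nhds (norm_pos_iff.2 (sub_ne_zero.2 (hx.ne hij)))] with ρ hρ _ using hρ
  obtain ⟨ρ, hρ, hρ₀⟩ := ((eventually_all.2 fun i => eventually_all.2 (hpos i)).and
    self_mem_nhdsWithin).exists
  have hnear (i j : ι) : ∀ᶠ y in 𝓝 x,
      i ≠ j → ρ < ‖(m i * y + c i) - (m j * y + c j)‖ := by
    by_cases hij : i = j
    · simp [hij]
    · have hcont : Continuous fun y => ‖(m i * y + c i) - (m j * y + c j)‖ := by fun_prop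
      filter_upwards [hcont.continuousAt.eventually (lt_mem_nhds (hρ i j hij))] with y hy _ using hy
  refine ⟨ρ, hρ₀, ?_⟩
  filter_upwards [eventually_all.2 fun i => eventually_all.2 (hnear i)] with y hy i j hij
    using (hy i j hij).le

variable [Fintype ι]

theorem farBound_le_add (x y : ℂ) :
    farBound m c y ≤ farBound m c x + ‖y - x‖ * ∑ i, ‖m i‖ := by
  have hm : 0 ≤ ∑ i, ‖m i‖ := Finset.sum_nonneg fun i _ => norm_nonneg (m i)
  rw [farBound, farBound, mul_comm ‖y - x‖]
  linarith [mul_le_mul_of_nonneg_left (norm_le_norm_add_norm_sub' y x) hm]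

theorem le_norm_sub_of_farBound_add_le {x : ℂ} {ρ r : ℝ} (hr : farBound m c x + ρ ≤ r) (i : ι) :
    ρ ≤ ‖(r : ℂ) - (m i * x + c i)‖ := by
  have hnorm := norm_sub_norm_le (r : ℂ) (m i * x + c i)
  rw [Complex.norm_real] at hnorm
  linarith [le_abs_self r, norm_le_farBound (m := m) (c := c) x i, Real.norm_eq_abs r]

variable {Q : Type*} [Group Q] {Φ : Holonomy (graphCompl m c) Q} {S : Subgroup Q}

theorem VerticalIn.of_displacement
    (hΦ : ∀ γ : C(I, graphCompl m c), (∀ t, (γ t).1 ∈ farSet m c) → Φ γ = 1) {x y : ℂ} {ρ : ℝ}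
    (hρ : 0 < ρ) (hp : Pairwise fun i j => ρ ≤ ‖(m i * x + c i) - (m j * x + c j)‖)
    (hxy : ‖y - x‖ * ∑ i, ‖m i‖ < ρ) (hy : VerticalIn Φ S y) : VerticalIn Φ S x := by
  obtain ⟨β, hβ_zero, hβ⟩ := exists_displacement (v := m) hρ hp
  let r : ℝ := farBound m c x + ρ
  have hβr : β r = 0 := hβ_zero _ (le_norm_sub_of_farBound_add_le le_rfl)
  have hnorm (s : I) : ‖(s : ℂ) * (y - x)‖ * ∑ i, ‖m i‖ < ρ := by
    refine lt_of_le_of_lt (mul_le_mul_of_nonneg_right ?_ ?_) hxy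
    · rw [norm_mul, Complex.norm_real, Real.norm_of_nonneg s.2.1]
      exact mul_le_of_le_one_left (norm_nonneg _) s.2.2
    · exact Finset.sum_nonneg fun i _ => norm_nonneg (m i)
  have hfar (s : I) : (x + s * (y - x), (r : ℂ)) ∈ farSet m c := by
    have h := farBound_le_add (m := m) (c := c) x (x + s * (y - x))
    rw [add_sub_cancel_left] at h
    exact h.trans_lt (add_lt_add_right (hnorm s) _)
  have hx : (x, (r : ℂ)) ∈ farSet m c := by simpa using hfar 0
  refine verticalIn_of_loops (p := ⟨_, farSet_subset_graphCompl hx⟩) hΦ hx fun γ hγ => ?_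
  let H : C(I × I, graphCompl m c) :=
    ⟨fun p => ⟨(x + p.1 * (y - x), (γ p.2).1.2 + p.1 * (y - x) * β (γ p.2).1.2), fun i h =>
      hβ _ (hnorm p.1) i _ (hγ p.2 ▸ (γ p.2).2 i) (by linear_combination h)⟩, by fun_prop⟩
  have edge (t : I) (ht : (γ t).1.2 = r) : Φ (H.comp (.prodMk (.id I) (.const I t))) = 1 :=
    hΦ _ fun s => by simpa [H, ht, hβr] using hfar s
  have hγ₁ := hy (H.comp (.prodMk (.const I 1) (.id I))) (by simp [H])
    (by simpa [H, hβr] using hfar 1) (by simpa [H, hβr] using hfar 1)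
  have hsquare := Φ.map_square H (γ₀ := γ) (γ₁ := H.comp (.prodMk (.const I 1) (.id I)))
    (α := H.comp (.prodMk (.id I) (.const I 0))) (β := H.comp (.prodMk (.id I) (.const I 1)))
    (fun t => Subtype.ext (Prod.ext (by simp [H, hγ]) (by simp [H]))) (fun _ => rfl)
    (fun _ => rfl) (fun _ => rfl)
  rw [edge 0 (by simp), edge 1 (by simp), one_mul, mul_one] at hsquare
  exact hsquare ▸ hγ₁

theorem VerticalIn.eventually
    (hΦ : ∀ γ : C(I, graphCompl m c), (∀ t, (γ t).1 ∈ farSet m c) → Φ γ = 1) {x : ℂ}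
    (hx : x ∈ genericSet m c) (h : VerticalIn Φ S x) : ∀ᶠ y in 𝓝 x, VerticalIn Φ S y := by
  obtain ⟨ρ, hρ, hsep⟩ := exists_pos_eventually_pairwise_le hx
  have hcont : Continuous fun y => ‖x - y‖ * ∑ i, ‖m i‖ := by fun_prop
  filter_upwards [hsep, hcont.continuousAt.eventually (gt_mem_nhds (by simpa using hρ))]
    with y hy hxy using h.of_displacement hΦ hρ hy hxy

theorem VerticalIn.of_generic
    (hΦ : ∀ γ : C(I, graphCompl m c), (∀ t, (γ t).1 ∈ farSet m c) → Φ γ = 1) {x₀ : ℂ}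
    (hx₀ : x₀ ∈ genericSet m c) (h : VerticalIn Φ S x₀) (x : ℂ) : VerticalIn Φ S x := by
  have hclosed : IsClosed {x | VerticalIn Φ S x} := isClosed_setOf_verticalIn hΦ
  have hinterior : {x | VerticalIn Φ S x} ∩ genericSet m c ⊆ interior {x | VerticalIn Φ S x} :=
    fun y hy => mem_interior_iff_mem_nhds.2 (hy.1.eventually hΦ hy.2)
  have hsub : genericSet m c ⊆ interior {x | VerticalIn Φ S x} :=
    (isPathConnected_genericSet ⟨x₀, hx₀⟩).isConnected.isPreconnected.subset_of_closure_inter_subset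
      isOpen_interior ⟨x₀, hx₀, hinterior ⟨h, hx₀⟩⟩ fun y hy =>
        hinterior ⟨closure_minimal interior_subset hclosed hy.1, hy.2⟩
  exact closure_minimal (hsub.trans interior_subset) hclosed (dense_genericSet ⟨x₀, hx₀⟩ x)

end GenericFibres

section Generation

variable {ι : Type*} [Fintype ι] {m c : ι → ℂ}

/-- The curve `κ` lies in the fibre of `p` and leads from the far region to `p`. -/
structure IsDescent (κ : C(I, graphCompl m c)) (p : graphCompl m c) : Prop where
  fst_eq : ∀ t, (κ t).1.1 = p.1.1
  start_mem : (κ 0).1 ∈ farSet m c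
  end_eq : κ 1 = p

theorem exists_isDescent (p : graphCompl m c) : ∃ κ, IsDescent κ p := by
  let x := p.1.1
  let y : ℂ := (farBound m c x + 1 : ℝ)
  have hfar : (x, y) ∈ farSet m c := lt_add_one (farBound m c x)
  have hjoin := (isPathConnected_forall_apply_ne (fun _ : ι => LinearMap.id)
    (fun i => m i * x + c i) ⟨p.1.2, p.2⟩).joinedIn y (farSet_subset_graphCompl hfar) p.1.2 p.2
  let δ := hjoin.somePath
  exact ⟨⟨fun t => ⟨(x, δ t), hjoin.somePath_mem t⟩, by fun_prop⟩, fun _ => rfl,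
    by simpa using hfar, Subtype.ext (Prod.ext rfl δ.target)⟩

variable {Q : Type*} [Group Q] {Φ : Holonomy (graphCompl m c) Q} {S : Subgroup Q}

theorem VerticalIn.inv_mul_mem {p : graphCompl m c} (h : VerticalIn Φ S p.1.1)
    {κ κ' : C(I, graphCompl m c)} (hκ : IsDescent κ p) (hκ' : IsDescent κ' p) :
    (Φ κ')⁻¹ * Φ κ ∈ S := by
  let δ : Path (κ 0) p := ⟨κ, rfl, hκ.end_eq⟩
  let δ' : Path (κ' 0) p := ⟨κ', rfl, hκ'.end_eq⟩
  have hmem := h (δ.trans δ'.symm) (fun t => by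
    change ((δ.trans δ'.symm) t).1.1 = _
    rw [Path.trans_apply]
    split_ifs
    · exact hκ.fst_eq _
    · exact hκ'.fst_eq _) (by simpa using hκ.start_mem) (by simpa using hκ'.start_mem)
  rwa [Φ.map_trans, Φ.map_symm] at hmem

theorem exists_nhds_exists_isDescent
    (hΦ : ∀ γ : C(I, graphCompl m c), (∀ t, (γ t).1 ∈ farSet m c) → Φ γ = 1) (p : graphCompl m c) :
    ∃ W ∈ 𝓝 p, ∀ γ : C(I, graphCompl m c), (∀ t, γ t ∈ W) →
      ∃ κ₀ κ₁, IsDescent κ₀ (γ 0) ∧ IsDescent κ₁ (γ 1) ∧ Φ γ * Φ κ₀ = Φ κ₁ := by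
  obtain ⟨κ, hκ⟩ := exists_isDescent p
  have hshift : Tendsto (fun q : ℂ × ℂ => q - p.1) (𝓝 p.1) (𝓝 0) :=
    Continuous.tendsto' (by fun_prop) _ _ (by simp)
  obtain ⟨ε, hε, hball⟩ := Metric.mem_nhds_iff.1 <| inter_mem (isOpen_graphCompl.mem_nhds p.2)
    (hshift.eventually (eventually_exists_shear hΦ κ hκ.start_mem))
  have descent (q : graphCompl m c) (hq : q.1 ∈ Metric.ball p.1 ε) :
      ∃ κ' β : C(I, graphCompl m c), IsDescent κ' q ∧
        (∀ s, (β s).1 = AffineMap.lineMap p.1 q.1 (s : ℝ)) ∧ Φ κ' = Φ β * Φ κ := by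
    obtain ⟨κ', β, hstart, hκ', hβ, heq⟩ := (hball hq).2
    refine ⟨κ', β, ⟨fun t => ?_, hstart, Subtype.ext ?_⟩, fun s => ?_, heq⟩
    · simp [hκ', hκ.fst_eq]
    · simp [hκ', hκ.end_eq, Prod.ext_iff]
    · simp [hβ, hκ.end_eq, AffineMap.lineMap_apply, add_comm]
  refine ⟨_, continuous_subtype_val.continuousAt.preimage_mem_nhds (Metric.ball_mem_nhds p.1 hε),
    fun γ hγ => ?_⟩
  obtain ⟨κ₀, β₀, hκ₀, hβ₀, heq₀⟩ := descent (γ 0) (hγ 0)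
  obtain ⟨κ₁, β₁, hκ₁, hβ₁, heq₁⟩ := descent (γ 1) (hγ 1)
  refine ⟨κ₀, κ₁, hκ₀, hκ₁, ?_⟩
  rw [heq₀, heq₁, ← mul_assoc]
  congr 1
  have hconvex := convex_ball p.1 ε
  have hp := Metric.mem_ball_self (x := p.1) hε
  let lift (δ : C(I, graphCompl m c)) (hδ : ∀ t, (δ t).1 ∈ Metric.ball p.1 ε) :
      C(I, Metric.ball p.1 ε) := ⟨fun t => ⟨_, hδ t⟩, by fun_prop⟩
  exact Φ.map_trans_of_convex hconvex ⟨fun q => ⟨q, (hball q.2).1⟩, by fun_prop⟩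
    (γ := lift β₀ fun s => hβ₀ s ▸ hconvex.lineMap_mem hp (hγ 0) s.2) (δ := lift γ hγ)
    (η := lift β₁ fun s => hβ₁ s ▸ hconvex.lineMap_mem hp (hγ 1) s.2)
    (Subtype.ext (by simp [lift, hβ₀])) (Subtype.ext (by simp [lift, hβ₀, hβ₁]))
    (Subtype.ext (by simp [lift, hβ₁]))

theorem mem_of_forall_verticalIn
    (hΦ : ∀ γ : C(I, graphCompl m c), (∀ t, (γ t).1 ∈ farSet m c) → Φ γ = 1)
    (h : ∀ x, VerticalIn Φ S x) {γ : C(I, graphCompl m c)} (h₀ : (γ 0).1 ∈ farSet m c)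
    (h₁ : (γ 1).1 ∈ farSet m c) : Φ γ ∈ S := by
  choose κ hκ using exists_isDescent (m := m) (c := c)
  have hmem := Φ.mem_of_gauge S (fun p => Φ (κ p)) (fun p => ?_) γ
  · have far_mem {p : graphCompl m c} (hp : p.1 ∈ farSet m c) : Φ (κ p) ∈ S :=
      h p.1.1 _ (hκ p).fst_eq (hκ p).start_mem (by rwa [(hκ p).end_eq])
    rwa [S.mul_mem_cancel_right (far_mem h₀), S.mul_mem_cancel_left (S.inv_mem (far_mem h₁))]
      at hmem
  · obtain ⟨W, hW, hdescent⟩ := exists_nhds_exists_isDescent hΦ p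
    refine ⟨W, hW, fun γ hγ => ?_⟩
    obtain ⟨κ₀, κ₁, hκ₀, hκ₁, heq⟩ := hdescent γ hγ
    convert S.mul_mem ((h _).inv_mul_mem hκ₁ (hκ (γ 1))) ((h _).inv_mul_mem (hκ (γ 0)) hκ₀) using 1
    simp [← heq, mul_assoc]

end Generation

section Rotation

variable {ι : Type*} {m c : ι → ℂ}

theorem inv_smul_mem_graphCompl {u : ℂ} (hu : u ≠ 0) {x y : ℂ}
    (h : ∀ i, y ≠ m i * x + u * c i) : u⁻¹ • (x, y) ∈ graphCompl m c := by
  intro i hi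
  refine h i ?_
  have hi : u⁻¹ * y = m i * (u⁻¹ * x) + c i := hi
  rw [← mul_inv_cancel_left₀ hu y, hi]
  linear_combination m i * x * mul_inv_cancel₀ hu

variable [Fintype ι]

theorem verticalIn_centralizer_of_rotation {Q : Type*} [Group Q]
    {Φ : Holonomy (graphCompl m c) Q}
    (hΦ : ∀ γ : C(I, graphCompl m c), (∀ t, (γ t).1 ∈ farSet m c) → Φ γ = 1) {x : ℂ} {r ρ : ℝ}
    (hρ : 2 * ∑ i, ‖c i‖ < ρ) (hr : farBound m c x + ρ ≤ r)
    (hsep : Pairwise fun i j => ρ ≤ ‖(m i * x + c i) - (m j * x + c j)‖)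
    {p : graphCompl m c} (hp : p.1 = (x, (r : ℂ))) {u : Path (1 : ℂ) 1} (hu : ∀ t, ‖u t‖ = 1)
    {τ : Path p p} (hτ : ∀ t, (τ t).1 = (u t)⁻¹ • p.1) :
    VerticalIn Φ (Subgroup.centralizer {Φ τ}) x := by
  have hc : 0 ≤ ∑ i, ‖c i‖ := Finset.sum_nonneg fun i _ => norm_nonneg (c i)
  obtain ⟨β, hβ_zero, hβ⟩ := exists_displacement (v := c) (by linarith) hsep
  have hβr : β r = 0 := hβ_zero _ (le_norm_sub_of_farBound_add_le hr)
  have hu₀ (s : I) : u s ≠ 0 := norm_ne_zero_iff.1 (hu s ▸ one_ne_zero)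
  have hnorm (s : I) : ‖u s - 1‖ * ∑ i, ‖c i‖ < ρ := by
    refine lt_of_le_of_lt (mul_le_mul_of_nonneg_right ?_ hc) hρ
    simpa [hu, one_add_one_eq_two] using norm_sub_le (u s) 1
  have hx : p.1.1 = x := congrArg Prod.fst hp
  have hfar : p.1 ∈ farSet m c := hp ▸ show farBound m c x < r by linarith
  rw [← hx]
  refine verticalIn_of_loops hΦ hfar fun γ hγ => ?_
  have hmem (q : I × I) :
      (u q.1)⁻¹ • (x, (γ q.2).1.2 + (u q.1 - 1) * β (γ q.2).1.2) ∈ graphCompl m c := by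
    refine inv_smul_mem_graphCompl (hu₀ q.1) fun i h => ?_
    have hγi : (γ q.2).1.2 ≠ m i * x + c i := hx ▸ hγ q.2 ▸ (γ q.2).2 i
    exact hβ _ (hnorm q.1) i _ hγi (by linear_combination h)
  have hcont : Continuous fun q : I × I => (u q.1)⁻¹ :=
    Continuous.inv₀ (by fun_prop) fun q => hu₀ q.1
  let H : C(I × I, graphCompl m c) := ⟨fun q => ⟨_, hmem q⟩, by fun_prop⟩
  refine Subgroup.mem_centralizer_singleton_iff.2 <|
    Φ.map_square H (γ₀ := γ) (γ₁ := γ) (α := τ) (β := τ) (fun t => ?_) (fun t => ?_)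
      (fun s => Subtype.ext ?_) (fun s => Subtype.ext ?_)
  · exact Subtype.ext (Prod.ext (by simp [H, hγ, hx]) (by simp [H]))
  · exact Subtype.ext (Prod.ext (by simp [H, hγ, hx]) (by simp [H]))
  · simp [H, hτ, hp, hβr]
  · simp [H, hτ, hp, hβr]

theorem loopClass_mem_center_of_rotation {x : ℂ} {r ρ : ℝ} (hρ : 2 * ∑ i, ‖c i‖ < ρ)
    (hr : farBound m c x + ρ ≤ r)
    (hsep : Pairwise fun i j => ρ ≤ ‖(m i * x + c i) - (m j * x + c j)‖)
    {p : graphCompl m c} (hp : p.1 = (x, (r : ℂ))) {u : Path (1 : ℂ) 1} (hu : ∀ t, ‖u t‖ = 1)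
    {τ : Path p p} (hτ : ∀ t, (τ t).1 = (u t)⁻¹ • p.1) :
    loopClass τ ∈ Subgroup.center (FundamentalGroup (graphCompl m c) p) := by
  have hρ₀ : 0 < ρ := by
    have hc : 0 ≤ ∑ i, ‖c i‖ := Finset.sum_nonneg fun i _ => norm_nonneg (c i)
    linarith
  have hfar : p.1 ∈ farSet m c := hp ▸ show farBound m c x < r by linarith
  have hgeneric : x ∈ genericSet m c := Function.injective_iff_pairwise_ne.2 fun i j hij =>
    sub_ne_zero.1 (norm_pos_iff.1 (hρ₀.trans_le (hsep hij)))
  have : ContractibleSpace (farSet m c) := (convex_farSet m c).contractibleSpace ⟨_, hfar⟩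
  obtain ⟨Φ, hΦ_loop, hΦ_far⟩ := Holonomy.exists_trivial_on (K := farSet m c)
    (f := ⟨inclusion farSet_subset_graphCompl, continuous_inclusion _⟩)
    (inclusion_injective farSet_subset_graphCompl) ⟨p.1, hfar⟩
  have hΦ (γ : C(I, graphCompl m c)) (hγ : ∀ t, (γ t).1 ∈ farSet m c) : Φ γ = 1 :=
    hΦ_far ⟨fun t => ⟨γ t, hγ t⟩, by fun_prop⟩
  have hvertical :=
    (verticalIn_centralizer_of_rotation hΦ hρ hr hsep hp hu hτ).of_generic hΦ hgeneric
  refine Subgroup.mem_center_iff.2 fun g => ?_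
  obtain ⟨γ, rfl⟩ := loopClass_surjective g
  have hmem := mem_of_forall_verticalIn hΦ hvertical (γ := γ) (by simpa using hfar)
    (by simpa using hfar)
  rw [← hΦ_loop γ, ← hΦ_loop τ]
  exact Subgroup.mem_centralizer_singleton_iff.1 hmem

end Rotation

section CentralMeridian

theorem eventually_le_norm_mul_add {a : ℂ} (ha : a ≠ 0) (b : ℂ) (ρ : ℝ) :
    ∀ᶠ r : ℝ in atTop, ρ ≤ ‖a * r + b‖ := by
  filter_upwards [eventually_ge_atTop ((ρ + ‖b‖) / ‖a‖)] with r hr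
  have hr : ρ + ‖b‖ ≤ r * ‖a‖ := (div_le_iff₀ (norm_pos_iff.2 ha)).1 hr
  calc ρ ≤ r * ‖a‖ - ‖b‖ := le_sub_iff_add_le.2 hr
    _ ≤ ‖a * r‖ - ‖b‖ := by
      rw [norm_mul, Complex.norm_real, mul_comm]
      gcongr
      exact le_abs_self r
    _ ≤ ‖a * r + b‖ := norm_sub_le_norm_add _ _

variable {ι : Type*} {m c : ι → ℂ}

theorem eventually_pairwise_le_of_injective [Finite ι] (hm : Function.Injective m) {x : ℂ}
    (hx : x ≠ 0) (ρ : ℝ) : ∀ᶠ r : ℝ in atTop, _root_.Pairwise fun i j =>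
      ρ ≤ ‖(m i * (r * x) + c i) - (m j * (r * x) + c j)‖ := by
  have hpair (i j : ι) : ∀ᶠ r : ℝ in atTop, i ≠ j →
      ρ ≤ ‖(m i * (r * x) + c i) - (m j * (r * x) + c j)‖ := by
    by_cases hij : i = j
    · simp [hij]
    · filter_upwards [eventually_le_norm_mul_add
        (mul_ne_zero (sub_ne_zero.2 (hm.ne hij)) hx) (c i - c j) ρ] with r hr _
      convert hr using 2
      ring
  filter_upwards [eventually_all.2 fun i => eventually_all.2 (hpair i)] with r hr i j using hr i j

variable [Fintype ι] {x : ℂ}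

theorem mem_slopeCompl_of_sum_norm_mul_lt (hx : (∑ i, ‖m i‖) * ‖x‖ < 1) : x ∈ slopeCompl m := by
  intro i hi
  have hnorm : ‖m i‖ * ‖x‖ = 1 := by rw [← norm_mul, hi, norm_one]
  refine hx.not_ge (hnorm ▸ mul_le_mul_of_nonneg_right ?_ (norm_nonneg x))
  exact Finset.single_le_sum (f := fun i => ‖m i‖) (fun _ _ => norm_nonneg _) (Finset.mem_univ i)

theorem eventually_farBound_add_le (hx : (∑ i, ‖m i‖) * ‖x‖ < 1) (ρ : ℝ) :
    ∀ᶠ r : ℝ in atTop, farBound m c (r * x) + ρ ≤ r := by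
  filter_upwards [eventually_ge_atTop ((∑ i, ‖c i‖ + ρ) / (1 - (∑ i, ‖m i‖) * ‖x‖)),
    eventually_ge_atTop 0] with r hr hr₀
  rw [div_le_iff₀ (sub_pos.2 hx)] at hr
  rw [farBound, norm_mul, Complex.norm_real, Real.norm_of_nonneg hr₀]
  linarith

theorem exists_puncturedTubeIncl_eq {x : slopeCompl m} {r : ℝ} (hr : tubeCurvature m c x < r) :
    ∃ w, (puncturedTubeIncl m c (x, w)).1 = ((r * x : ℂ), (r : ℂ)) := by
  have hr₀ : 0 < r := (tubeCurvature_pos m c x).trans hr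
  obtain ⟨w, hw⟩ := exists_tube_eq (m := m) (c := c) (x := x) (y := (r : ℂ)⁻¹) <| by
    rwa [norm_inv, Complex.norm_real, Real.norm_of_nonneg hr₀.le, ← div_eq_mul_inv, div_lt_one hr₀]
  have hw₀ : w ≠ 0 := tube_snd_ne_zero_iff.1 <| by
    rw [hw]
    exact inv_ne_zero (Complex.ofReal_ne_zero.2 hr₀.ne')
  refine ⟨⟨w, hw₀⟩, ?_⟩
  change chartSwap (tube m c (x, w)) = _
  rw [hw]
  simp [chartSwap, mul_comm]

/-- Far out along a line through the origin, all the other lines are so far apart that turning the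
plane once around the origin can be corrected near each of them. -/
theorem exists_meridian_mem_center (hm : Function.Injective m) :
    ∃ x w, meridian m c x w ∈ Subgroup.center _ := by
  have hM : 0 < 1 + ∑ i, ‖m i‖ :=
    add_pos_of_pos_of_nonneg one_pos (Finset.sum_nonneg fun i _ => norm_nonneg (m i))
  let x : ℂ := ((1 + ∑ i, ‖m i‖ : ℝ) : ℂ)⁻¹
  have hx₀ : x ≠ 0 := inv_ne_zero (Complex.ofReal_ne_zero.2 hM.ne')
  have hx : (∑ i, ‖m i‖) * ‖x‖ < 1 := by
    rw [norm_inv, Complex.norm_real, Real.norm_of_nonneg hM.le, ← div_eq_mul_inv, div_lt_one hM]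
    exact lt_one_add _
  let x' : slopeCompl m := ⟨x, mem_slopeCompl_of_sum_norm_mul_lt hx⟩
  let ρ : ℝ := 2 * ∑ i, ‖c i‖ + 1
  obtain ⟨r, hr, hsep, hfar⟩ := ((eventually_gt_atTop (tubeCurvature m c x')).and
    ((eventually_pairwise_le_of_injective (c := c) hm hx₀ ρ).and
      (eventually_farBound_add_le (c := c) hx ρ))).exists
  obtain ⟨w, hw⟩ := exists_puncturedTubeIncl_eq hr
  exact ⟨x', w, loopClass_mem_center_of_rotation (lt_add_one _) hfar hsep hw
    (u := (circleLoop ⟨1, one_ne_zero⟩).map continuous_subtype_val)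
    (fun t => norm_circleLoop _ t |>.trans norm_one)
    (fun t => puncturedTubeIncl_circleLoop m c x' w t)⟩

end CentralMeridian

theorem nonempty_fundamentalGroup_graphCompl_mulEquiv {ι : Type*} [Finite ι] {m c : ι → ℂ}
    (hm : Function.Injective m)
    (h0 : ∀ p ∈ graphCompl m c, p.2 ≠ 0) (p : graphCompl m c) (q : levelCompl m c) :
    Nonempty (FundamentalGroup (graphCompl m c) p ≃*
      FundamentalGroup (levelCompl m c) q × Multiplicative ℤ) := by
  have := Fintype.ofFinite ι
  obtain ⟨x, w, hcentral⟩ := exists_meridian_mem_center (c := c) hm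
  obtain ⟨ψ, hψ⟩ := exists_winding_meridian x w h0
  obtain ⟨e⟩ := nonempty_mulEquiv_prod_int _ (map_graphIncl_surjective h0 _)
    ((ker_map_graphIncl x w h0 hcentral).trans Subgroup.zpowers_inv.symm) ψ hψ
  exact ⟨(FundamentalGroup.fundamentalGroupMulEquivOfPathConnected p _).trans <| e.trans <|
    (FundamentalGroup.fundamentalGroupMulEquivOfPathConnected _ q).prodCongr (.refl _)⟩

section AdaptedBasis

open Module

variable {K V : Type*} [Field K] [AddCommGroup V] [Module K V]

theorem exists_eq_smul_of_ker_le_ker [FiniteDimensional K V] {φ ψ : Dual K V}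
    (h : LinearMap.ker φ ≤ LinearMap.ker ψ) : ∃ a : K, a • φ = ψ := by
  have hspan := mem_span_of_iInf_ker_le_ker (L := fun _ : Unit => φ) (K := ψ) (by simpa using h)
  rwa [range_const, Submodule.mem_span_singleton] at hspan

theorem exists_basis_coord_eq (hV : finrank K V = 3) {φ ψ : Dual K V} {e : V} (hφ : φ e = 0)
    (hψ : ψ e = 1) (hφ₀ : φ ≠ 0) :
    ∃ B : Basis (Fin 3) K V, B 1 = e ∧ B.coord 1 = ψ ∧ B.coord 2 = φ := by
  have : FiniteDimensional K V := .of_finrank_pos (by simp [hV])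
  obtain ⟨a, ha, ha₀⟩ : ∃ a ∈ LinearMap.ker (φ.prod ψ), a ≠ 0 :=
    (Submodule.ne_bot_iff _).1 (LinearMap.ker_ne_bot_of_finrank_lt (by simp [hV]))
  obtain ⟨hφa, hψa⟩ : φ a = 0 ∧ ψ a = 0 := Prod.mk.inj ha
  obtain ⟨z, hz⟩ := φ.surjective hφ₀ 1
  let b := z - ψ z • e
  have hφb : φ b = 1 := by simp [b, hφ, hz]
  have hψb : ψ b = 0 := by simp [b, hψ]
  have hli : LinearIndependent K ![a, e, b] := by
    refine Fintype.linearIndependent_iff.2 fun g hg => ?_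
    simp only [Fin.sum_univ_three, Matrix.cons_val] at hg
    have h₂ : g 2 = 0 := by simpa [hφa, hφ, hφb] using congrArg φ hg
    have h₁ : g 1 = 0 := by simpa [hψa, hψ, hψb] using congrArg ψ hg
    have h₀ : g 0 = 0 := by simpa [h₁, h₂, ha₀] using hg
    exact Fin.forall_fin_succ.2 ⟨h₀, Fin.forall_fin_two.2 ⟨h₁, h₂⟩⟩
  let B := basisOfLinearIndependentOfCardEqFinrank hli (by simp [hV])
  have hB : ⇑B = ![a, e, b] := coe_basisOfLinearIndependentOfCardEqFinrank _ _
  refine ⟨B, congrFun hB 1, B.ext fun i => ?_, B.ext fun i => ?_⟩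
  · rw [B.coord_apply, B.repr_self, hB]
    fin_cases i <;> simp [hψa, hψ, hψb]
  · rw [B.coord_apply, B.repr_self, hB]
    fin_cases i <;> simp [hφa, hφ, hφb]

theorem exists_basis_apply_ne_zero [Infinite K] (hV : finrank K V = 3) {ι : Type*} [Finite ι]
    {φ : Dual K V} (hφ : φ ≠ 0) {A : ι → Dual K V} (hA : ∀ i, ∃ v ∈ LinearMap.ker φ, A i v ≠ 0)
    (i₀ : ι) : ∃ B : Basis (Fin 3) K V,
      (∀ i, A i (B 1) ≠ 0) ∧ B.coord 1 = A i₀ ∧ B.coord 2 = φ := by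
  obtain ⟨v, hφv, hv⟩ := Dual.exists_forall_mem_ne_zero_of_forall_exists _ A hA
  have hφv : φ v = 0 := hφv
  obtain ⟨B, hB, hB₁, hB₂⟩ := exists_basis_coord_eq hV (φ := φ) (ψ := A i₀)
    (e := (A i₀ v)⁻¹ • v) (by simp [hφv]) (by simp [hv i₀]) hφ
  exact ⟨B, fun i => by simp [hB, hv], hB₁, hB₂⟩

variable (B : Basis (Fin 3) K V) (φ : Dual K V)

/-- The slope of the line `φ = 0`, written as `y = slope * x + intercept` in the coordinates
`x = B.coord 0 / B.coord 2` and `y = B.coord 1 / B.coord 2`. -/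
noncomputable def slope : K := -(φ (B 0) / φ (B 1))

/-- The intercept of the line `φ = 0`, in the same coordinates as `slope`. -/
noncomputable def intercept : K := -(φ (B 2) / φ (B 1))

variable {B φ}

theorem apply_eq_zero_iff_coord_eq (hφ : φ (B 1) ≠ 0) (v : V) :
    φ v = 0 ↔ B.coord 1 v = slope B φ * B.coord 0 v + intercept B φ * B.coord 2 v := by
  have hsum : φ v = B.coord 0 v * φ (B 0) + B.coord 1 v * φ (B 1) + B.coord 2 v * φ (B 2) := by
    conv_lhs => rw [← B.sum_repr v, Fin.sum_univ_three]
    simp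
  rw [hsum, slope, intercept]
  field_simp
  constructor <;> intro h <;> linear_combination h

theorem apply_add_slope_smul (hφ : φ (B 1) ≠ 0) : φ (B 0 + slope B φ • B 1) = 0 := by
  simp [slope, hφ]

end AdaptedBasis

section AffineCharts

open Module

theorem exists_dual_of_isProjLine {l : Set CP2} (hl : IsProjLine l) :
    ∃ φ : Dual ℂ (Fin 3 → ℂ), φ ≠ 0 ∧ ∀ x, x ∈ l ↔ φ x.rep = 0 := by
  obtain ⟨a, ha, rfl⟩ := hl
  exact ⟨dotProductEquiv ℂ (Fin 3) a, (dotProductEquiv ℂ (Fin 3)).map_ne_zero_iff.2 ha,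
    fun _ => Iff.rfl⟩

/-- The point of the projective plane with homogeneous coordinates `v`. -/
noncomputable def toCP2 (v : {v : Fin 3 → ℂ // v ≠ 0}) : CP2 := .mk ℂ v.1 v.2

theorem isQuotientMap_toCP2 : IsQuotientMap toCP2 := isQuotientMap_quotient_mk'

theorem exists_rep_toCP2_eq (v : {v : Fin 3 → ℂ // v ≠ 0}) : ∃ t : ℂˣ, (toCP2 v).rep = t • v.1 :=
  (Projectivization.exists_smul_eq_mk_rep ℂ v.1 v.2).imp fun _ => Eq.symm

theorem apply_rep_toCP2_eq_zero_iff (φ : Dual ℂ (Fin 3 → ℂ)) (v : {v : Fin 3 → ℂ // v ≠ 0}) :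
    φ (toCP2 v).rep = 0 ↔ φ v = 0 := by
  obtain ⟨t, ht⟩ := exists_rep_toCP2_eq v
  simp [ht, Units.smul_def]

theorem div_rep_toCP2 (φ ψ : Dual ℂ (Fin 3 → ℂ)) (v : {v : Fin 3 → ℂ // v ≠ 0}) :
    φ (toCP2 v).rep / ψ (toCP2 v).rep = φ v / ψ v := by
  obtain ⟨t, ht⟩ := exists_rep_toCP2_eq v
  simp [ht, Units.smul_def, mul_div_mul_left]

variable (B : Basis (Fin 3) ℂ (Fin 3 → ℂ))

/-- The affine coordinates of a point of the projective plane off the line `B.coord 2 = 0`. -/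
noncomputable def affineCoord (x : CP2) : ℂ × ℂ :=
  (B.coord 0 x.rep / B.coord 2 x.rep, B.coord 1 x.rep / B.coord 2 x.rep)

/-- The point of the projective plane with affine coordinates `p`. -/
noncomputable def affinePoint (p : ℂ × ℂ) : CP2 :=
  toCP2 ⟨p.1 • B 0 + p.2 • B 1 + B 2, fun h => by simpa using congrArg (B.coord 2) h⟩

theorem affineCoord_affinePoint (p : ℂ × ℂ) : affineCoord B (affinePoint B p) = p := by
  simp only [affineCoord, affinePoint, div_rep_toCP2]
  simp

theorem coord_rep_affinePoint_ne_zero (p : ℂ × ℂ) : B.coord 2 (affinePoint B p).rep ≠ 0 := by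
  rw [affinePoint, Ne, apply_rep_toCP2_eq_zero_iff]
  simp

variable {B}

theorem affinePoint_affineCoord {x : CP2} (hx : B.coord 2 x.rep ≠ 0) :
    affinePoint B (affineCoord B x) = x := by
  rw [← x.mk_rep, affinePoint, toCP2, Projectivization.mk_eq_mk_iff']
  refine ⟨(B.coord 2 x.rep)⁻¹, B.ext_elem fun i => ?_⟩
  rw [Basis.coord_apply] at hx
  fin_cases i <;> simp [affineCoord, div_eq_inv_mul, hx]

theorem continuous_affinePoint : Continuous (affinePoint B) :=
  isQuotientMap_toCP2.continuous.comp (Continuous.subtype_mk (by fun_prop) _)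

theorem continuousOn_affineCoord : ContinuousOn (affineCoord B) {x | B.coord 2 x.rep ≠ 0} := by
  have hcoord (i : Fin 3) : Continuous fun v : {v : Fin 3 → ℂ // v ≠ 0} => B.coord i v :=
    (B.coord i).continuous_of_finiteDimensional.comp continuous_subtype_val
  have hpreimage : toCP2 ⁻¹' {x | B.coord 2 x.rep ≠ 0} =
      {v | B.coord 2 v.1 ≠ 0} := by
    ext v
    exact not_congr (apply_rep_toCP2_eq_zero_iff _ v)
  have hopen : IsOpen {x : CP2 | B.coord 2 x.rep ≠ 0} := by
    rw [← isQuotientMap_toCP2.isOpen_preimage, hpreimage]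
    exact isOpen_ne_fun (hcoord 2) continuous_const
  rw [isQuotientMap_toCP2.continuousOn_isOpen_iff hopen, hpreimage]
  simp only [Function.comp_def, affineCoord, div_rep_toCP2]
  exact ((hcoord 0).continuousOn.div (hcoord 2).continuousOn fun _ => id).prodMk
    ((hcoord 1).continuousOn.div (hcoord 2).continuousOn fun _ => id)

theorem nonempty_homeomorph_of_affineCoord {U : Set CP2} {P : Set (ℂ × ℂ)}
    (hU : ∀ x ∈ U, B.coord 2 x.rep ≠ 0)
    (hUP : ∀ x, B.coord 2 x.rep ≠ 0 → (x ∈ U ↔ affineCoord B x ∈ P)) : Nonempty (U ≃ₜ P) :=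
  ⟨{  toFun x := ⟨affineCoord B x, (hUP x (hU x x.2)).1 x.2⟩
      invFun p := ⟨affinePoint B p, (hUP _ (coord_rep_affinePoint_ne_zero B p)).2 <|
        (affineCoord_affinePoint B p.1).symm ▸ p.2⟩
      left_inv x := Subtype.ext (affinePoint_affineCoord (hU x x.2))
      right_inv p := Subtype.ext (affineCoord_affinePoint B p)
      continuous_toFun := ((continuousOn_affineCoord (B := B)).comp_continuous
        continuous_subtype_val fun x : U => hU x x.2).subtype_mk _
      continuous_invFun := (continuous_affinePoint.comp continuous_subtype_val).subtype_mk _ }⟩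

/-- The isomorphism of fundamental groups induced by a homeomorphism. -/
noncomputable def fundamentalGroupCongr {X Y : Type*} [TopologicalSpace X] [TopologicalSpace Y]
    (e : X ≃ₜ Y) (x : X) : FundamentalGroup X x ≃* FundamentalGroup Y (e x) :=
  (FundamentalGroupoidFunctor.equivOfHomotopyEquiv
    e.toHomotopyEquiv).fullyFaithfulFunctor.mulEquivEnd _

end AffineCharts

section ProjectiveArrangement

open Module

variable {ι : Type*} {A : ι → Dual ℂ (Fin 3 → ℂ)}
  {B : Basis (Fin 3) ℂ (Fin 3 → ℂ)}

theorem slope_injective (hA : ∀ i, A i (B 1) ≠ 0)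
    (hsimple : ∀ x : CP2, B.coord 2 x.rep = 0 →
      ∀ i, A i x.rep = 0 → ∀ j, A j x.rep = 0 → i = j) :
    Function.Injective fun i => slope B (A i) := by
  intro i j hij
  let v := B 0 + slope B (A i) • B 1
  have hv : v ≠ 0 := fun h => by simpa [v] using congrArg (B.coord 0) h
  have hij : v = B 0 + slope B (A j) • B 1 := congrArg (fun s => B 0 + s • B 1) hij
  refine hsimple (toCP2 ⟨v, hv⟩) ?_ i ?_ j ?_ <;> rw [apply_rep_toCP2_eq_zero_iff]
  · simp [v]
  · exact apply_add_slope_smul (hA i)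
  · simpa only [hij] using apply_add_slope_smul (hA j)

theorem affineCoord_mem_graphCompl_iff (hA : ∀ i, A i (B 1) ≠ 0) {x : CP2}
    (hx : B.coord 2 x.rep ≠ 0) :
    affineCoord B x ∈ graphCompl (fun i => slope B (A i)) (fun i => intercept B (A i)) ↔
      ∀ i, A i x.rep ≠ 0 := by
  refine forall_congr' fun i => not_congr ?_
  rw [apply_eq_zero_iff_coord_eq (hA i), affineCoord, div_eq_iff hx, add_mul, mul_assoc,
    div_mul_cancel₀ _ hx]

theorem affineCoord_reindex_mem_levelCompl_iff (hA : ∀ i, A i (B 1) ≠ 0) {x : CP2}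
    (hx : B.coord 1 x.rep ≠ 0) : affineCoord (B.reindex (Equiv.swap 1 2)) x ∈
      levelCompl (fun i => slope B (A i)) (fun i => intercept B (A i)) ↔ ∀ i, A i x.rep ≠ 0 := by
  have hcoord : affineCoord (B.reindex (Equiv.swap 1 2)) x =
      (B.coord 0 x.rep / B.coord 1 x.rep, B.coord 2 x.rep / B.coord 1 x.rep) := by
    simp [affineCoord, Equiv.swap_apply_of_ne_of_ne]
  refine forall_congr' fun i => not_congr ?_
  rw [apply_eq_zero_iff_coord_eq (hA i), hcoord, mul_div_assoc', mul_div_assoc', ← add_div,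
    div_eq_one_iff_eq hx, eq_comm]

theorem snd_ne_zero_of_mem_graphCompl {i₀ : ι} (hB : B.coord 1 = A i₀) {p : ℂ × ℂ}
    (hp : p ∈ graphCompl (fun i => slope B (A i)) (fun i => intercept B (A i))) : p.2 ≠ 0 := by
  intro h
  apply hp i₀
  simp [slope, intercept, h, ← hB]

theorem nonempty_fundamentalGroup_mulEquiv_prod_int [Finite ι] [Nonempty ι]
    {φ : Dual ℂ (Fin 3 → ℂ)} (hφ : φ ≠ 0) (hA : ∀ i, ∃ v ∈ LinearMap.ker φ, A i v ≠ 0)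
    (hsimple : ∀ x : CP2, φ x.rep = 0 → ∀ i, A i x.rep = 0 → ∀ j, A j x.rep = 0 → i = j)
    {U V : Set CP2} (hU : ∀ x, x ∈ U ↔ φ x.rep ≠ 0 ∧ ∀ i, A i x.rep ≠ 0)
    (hV : ∀ x, x ∈ V ↔ ∀ i, A i x.rep ≠ 0) (x : U) (y : V) :
    Nonempty (FundamentalGroup U x ≃* FundamentalGroup V y × Multiplicative ℤ) := by
  obtain ⟨i₀⟩ := ‹Nonempty ι›
  obtain ⟨B, hB, hB₁, rfl⟩ := exists_basis_apply_ne_zero (by simp) hφ hA i₀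
  obtain ⟨eU⟩ := nonempty_homeomorph_of_affineCoord (fun x hx => ((hU x).1 hx).1) fun x hx =>
    (hU x).trans ((and_iff_right hx).trans (affineCoord_mem_graphCompl_iff hB hx).symm)
  have hswap : (B.reindex (Equiv.swap 1 2)).coord 2 = A i₀ := by
    rw [← hB₁]
    ext v
    simp
  obtain ⟨eV⟩ := nonempty_homeomorph_of_affineCoord (B := B.reindex (Equiv.swap 1 2))
    (fun x hx => hswap ▸ (hV x).1 hx i₀) fun x hx =>
      (hV x).trans (affineCoord_reindex_mem_levelCompl_iff hB (hB₁ ▸ hswap ▸ hx)).symm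
  obtain ⟨e⟩ := nonempty_fundamentalGroup_graphCompl_mulEquiv (slope_injective hB hsimple)
    (fun p => snd_ne_zero_of_mem_graphCompl hB₁) (eU x) (eV y)
  exact ⟨(fundamentalGroupCongr eU x).trans <| e.trans <|
    (fundamentalGroupCongr eV y).symm.prodCongr (.refl _)⟩

theorem exists_mem_ker_apply_ne_zero {l l' : Set CP2} {φ ψ : Dual ℂ (Fin 3 → ℂ)} (hψ : ψ ≠ 0)
    (hl : ∀ x, x ∈ l ↔ φ x.rep = 0) (hl' : ∀ x, x ∈ l' ↔ ψ x.rep = 0) (hne : l ≠ l') :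
    ∃ v ∈ LinearMap.ker φ, ψ v ≠ 0 := by
  by_contra! h
  obtain ⟨a, rfl⟩ := exists_eq_smul_of_ker_le_ker h
  have ha : a ≠ 0 := fun ha => hψ (by simp [ha])
  exact hne (Set.ext fun x => by simp [hl, hl', ha])

end ProjectiveArrangement

end LineArrangement

/-- If a projective line arrangement `𝓛 ⊂ ℂP²` equals `𝓛' ∪ {L₀}`,
where `L₀` is a simple line of `𝓛` (all intersection points of `𝓛` on `L₀` are double
points) and `𝓛'` is nonempty, then `π₁(ℂP² \ 𝓛) ≅ π₁(ℂP² \ 𝓛') × ℤ`. -/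
theorem projective_simple_line_splits_Z
    (L' : Finset (Set CP2)) (L₀ : Set CP2)
    (hL' : ∀ l ∈ L', IsProjLine l) (hL₀ : IsProjLine L₀)
    (hne : L₀ ∉ L') (hnonempty : L'.Nonempty)
    -- `L₀` is simple: a point of `L₀` lying on a line of `𝓛'` lies on no second line of `𝓛'`
    (hsimple : ∀ p ∈ L₀, ∀ l ∈ L', p ∈ l → ∀ l' ∈ L', p ∈ l' → l' = l)
    (x₀ : CP2) (hx₀ : ∀ l ∈ insert L₀ L', x₀ ∉ l) :
    Nonempty
      (FundamentalGroup {x : CP2 // ∀ l ∈ insert L₀ L', x ∉ l} ⟨x₀, hx₀⟩ ≃*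
        (FundamentalGroup {x : CP2 // ∀ l ∈ L', x ∉ l}
            ⟨x₀, fun l hl => hx₀ l (Finset.mem_insert_of_mem hl)⟩ ×
          Multiplicative ℤ)) := by
  obtain ⟨φ, hφ, hmem₀⟩ := LineArrangement.exists_dual_of_isProjLine hL₀
  choose! A hA hmem using fun l hl => LineArrangement.exists_dual_of_isProjLine (hL' l hl)
  have : Nonempty L' := hnonempty.to_subtype
  refine LineArrangement.nonempty_fundamentalGroup_mulEquiv_prod_int
    (ι := L') (A := fun l => A l) hφ
    (fun l => LineArrangement.exists_mem_ker_apply_ne_zero (hA l l.2) hmem₀ (hmem l l.2)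
      fun h => hne (h ▸ l.2))
    (fun x hx l hl l' hl' => ?_)
    (U := {x | ∀ l ∈ insert L₀ L', x ∉ l}) (V := {x | ∀ l ∈ L', x ∉ l})
    (fun x => ?_) (fun x => ?_) _ _
  · exact Subtype.ext <| hsimple x ((hmem₀ x).2 hx) l' l'.2 ((hmem l' l'.2 x).2 hl') l l.2 <|
      (hmem l l.2 x).2 hl
  · simp +contextual [hmem₀, hmem]
  · simp +contextual [hmem]
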